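/- Polynomial growth implies polynomial: assume m > 4 and let l ≥ 1 be an integer. Suppose f ∈ C²(ℝ^m×𝔹^m, ℋ_k) satisfies 𝒟_k f = 0 in ℝ^m × 𝔹^m and ∫_{B(0,R)} ∫_{𝔹^m} |f(x,ν)| dν dx = o(R^{l+m}) as R → ∞ (Lebesgue measure in both variables). Then D_x^α f ≡ 0 on ℝ^m × 𝔹^m for every multi-index α ∈ ℕ^m with |α| = l; equivalently, for each fixed ν ∈ 𝔹^m the function x ↦ f(x,ν) is a polynomial of degree at most l−1. -/

import Mathlib

noncomputable section

open MeasureTheory Metric Filter Topology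
open scoped RealInnerProductSpace

/-- `ℝ^m` as a Euclidean space. -/
abbrev Evec (m : ℕ) : Type := EuclideanSpace ℝ (Fin m)

/-- Partial derivative in the `i`-th coordinate direction. -/
def pdv {m : ℕ} (i : Fin m) (f : Evec m → ℝ) (x : Evec m) : ℝ :=
  fderiv ℝ f x (EuclideanSpace.single i 1)

/-- Euclidean Laplacian on `ℝ^m`. -/
def lapl {m : ℕ} (f : Evec m → ℝ) (x : Evec m) : ℝ :=
  ∑ i : Fin m, pdv i (pdv i f) x

/-- `p` is a real-valued polynomial function on `ℝ^m`, homogeneous of degree `k` and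
harmonic; i.e. `p ∈ ℋ_k`. -/
def IsHk (m k : ℕ) (p : Evec m → ℝ) : Prop :=
  (∃ P : MvPolynomial (Fin m) ℝ, ∀ x : Evec m, p x = MvPolynomial.eval (fun i => x i) P) ∧
  (∀ (c : ℝ) (x : Evec m), p (c • x) = c ^ k * p x) ∧
  (∀ x : Evec m, lapl p x = 0)

/-- The surface measure `dS` on the unit sphere `𝕊^{m-1}`, as a measure on `ℝ^m`. -/
def sphereM (m : ℕ) : Measure (Evec m) :=
  Measure.map Subtype.val ((volume : Measure (Evec m)).toSphere)

/-- `ω_m`, the surface area of the unit sphere `𝕊^{m-1}`. -/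
def omegaS (m : ℕ) : ℝ := (sphereM m Set.univ).toReal

/-- The constant `c_{m,k} = 2(m+2k-2)/((m-2)ω_m)`. -/
def cmk (m k : ℕ) : ℝ := 2 * ((m : ℝ) + 2 * k - 2) / (((m : ℝ) - 2) * omegaS m)

/-- The reflection `R_a(u) = u - 2⟨a,u⟩a/|a|²` (in Clifford notation `a u a/|a|²`). -/
def reflv {m : ℕ} (a u : Evec m) : Evec m :=
  u - (2 * ⟪a, u⟫ / ‖a‖ ^ 2) • a

/-- `dim ℋ_k`. -/
def hdim (m k : ℕ) : ℕ :=
  Nat.choose (m + k - 1) (m - 1) - Nat.choose (m + k - 3) (m - 1)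

/-- `Z` is the reproducing kernel `Z_k` of `ℋ_k` on the unit sphere: a symmetric,
rotation invariant kernel, bounded by `dim ℋ_k` on the unit ball, belonging to `ℋ_k`
in the first variable and reproducing elements of `ℋ_k` from their spherical values. -/
def IsZk (m k : ℕ) (Z : Evec m → Evec m → ℝ) : Prop :=
  (∀ v : Evec m, IsHk m k (fun u => Z u v)) ∧
  (∀ p : Evec m → ℝ, IsHk m k p → ∀ v : Evec m, (∫ u, Z u v * p u ∂(sphereM m)) = p v) ∧
  (∀ u v : Evec m, Z u v = Z v u) ∧
  (∀ u v : Evec m, ‖u‖ ≤ 1 → ‖v‖ ≤ 1 → |Z u v| ≤ (hdim m k : ℝ)) ∧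
  (∀ (A : Evec m ≃ₗᵢ[ℝ] Evec m) (u v : Evec m), Z (A u) (A v) = Z u v)

/-- The point `(x', y) ∈ ℝ^{d+1}` with first `d` coordinates `x'` and last coordinate `y`. -/
def upP (d : ℕ) (x' : Evec d) (y : ℝ) : Evec (d + 1) :=
  (EuclideanSpace.equiv (Fin (d + 1)) ℝ).symm
    (Fin.snoc (⇑(EuclideanSpace.equiv (Fin d) ℝ) x') y)

/-- The first `d` coordinates of a point of `ℝ^{d+1}`. -/
def downP (d : ℕ) (x : Evec (d + 1)) : Evec d :=
  (EuclideanSpace.equiv (Fin d) ℝ).symm (fun i => x (Fin.castSucc i))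

/-- The last coordinate of a point of `ℝ^{d+1}`. -/
def lastP (d : ℕ) (x : Evec (d + 1)) : ℝ := x (Fin.last d)

/-- The Poisson kernel `P_H` for bosonic Laplacians in the upper half-space `ℝ^{d+1}_+`,
`P_H(x,t,u,v) = c_{m,k} (y/|x-t|^m) Z_k(R_{x-t}(u), v)` with `m = d+1`, `x = (x',y)`,
`t = (t',0)`. -/
def PH (d k : ℕ) (Z : Evec (d + 1) → Evec (d + 1) → ℝ) (x' : Evec d) (y : ℝ)
    (t' : Evec d) (u v : Evec (d + 1)) : ℝ :=
  cmk (d + 1) k * (y / ‖upP d x' y - upP d t' 0‖ ^ (d + 1)) *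
    Z (reflv (upP d x' y - upP d t' 0) u) v

/-- The Poisson integral `P_H[f]` in the upper half-space. -/
def PHint (d k : ℕ) (Z : Evec (d + 1) → Evec (d + 1) → ℝ)
    (f : Evec d → Evec (d + 1) → ℝ) (x' : Evec d) (y : ℝ) (v : Evec (d + 1)) : ℝ :=
  ∫ t' : Evec d, (∫ u, PH d k Z x' y t' u v * f t' u ∂(sphereM (d + 1)))

/-- The Poisson kernel `P_B` for bosonic Laplacians in the unit ball. -/
def PB (m k : ℕ) (Z : Evec m → Evec m → ℝ) (x ζ ω ν : Evec m) : ℝ :=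
  (cmk m k / 2) * ((1 - ‖x‖ ^ 2) / ‖x - ζ‖ ^ m) * Z (reflv (x - ζ) ω) ν

/-- The Poisson integral `P_B[h]` in the unit ball. -/
def PBint (m k : ℕ) (Z : Evec m → Evec m → ℝ) (h : Evec m → Evec m → ℝ)
    (x ν : Evec m) : ℝ :=
  ∫ ζ, (∫ ω, PB m k Z x ζ ω ν * h ζ ω ∂(sphereM m)) ∂(sphereM m)

/-- Partial derivative in the first (`x`) variable. -/
def pd1 {m : ℕ} (i : Fin m) (f : Evec m → Evec m → ℝ) : Evec m → Evec m → ℝ :=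
  fun x u => fderiv ℝ (fun x₁ => f x₁ u) x (EuclideanSpace.single i 1)

/-- Partial derivative in the second (`u`) variable. -/
def pd2 {m : ℕ} (i : Fin m) (f : Evec m → Evec m → ℝ) : Evec m → Evec m → ℝ :=
  fun x u => fderiv ℝ (fun u₁ => f x u₁) u (EuclideanSpace.single i 1)

/-- The bosonic Laplacian `𝒟_k`. -/
def Dk (m k : ℕ) (f : Evec m → Evec m → ℝ) : Evec m → Evec m → ℝ := fun x u =>
  (∑ i : Fin m, pd1 i (pd1 i f) x u)
    - (4 / ((m : ℝ) + 2 * k - 2)) *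
        ∑ i : Fin m, ∑ j : Fin m, u i * pd1 i (pd2 j (pd1 j f)) x u
    + (4 * ‖u‖ ^ 2 / (((m : ℝ) + 2 * k - 2) * ((m : ℝ) + 2 * k - 4))) *
        ∑ i : Fin m, ∑ j : Fin m, pd2 i (pd1 i (pd2 j (pd1 j f))) x u

/-- `f ∈ C²(Ω×𝔹^m, ℋ_k)`: twice continuously differentiable on `Ω × 𝔹^m` and, for each
fixed `x ∈ Ω`, coinciding in the second variable with an element of `ℋ_k`. -/
def C2Hk (m k : ℕ) (Ω : Set (Evec m)) (f : Evec m → Evec m → ℝ) : Prop :=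
  ContDiffOn ℝ 2 (fun q : Evec m × Evec m => f q.1 q.2) (Ω ×ˢ ball (0 : Evec m) 1) ∧
  ∀ x ∈ Ω, ∃ q, IsHk m k q ∧ ∀ u ∈ closedBall (0 : Evec m) 1, f x u = q u

/-- The `L^p` norm `(∫_{ℝ^{m-1}} ∫_{𝕊^{m-1}} |f(x',u)|^p dS(u) dx')^{1/p}` (`m = d+1`),
valued in `ℝ≥0∞`. -/
def lpH (d : ℕ) (p : ℝ) (f : Evec d → Evec (d + 1) → ℝ) : ENNReal :=
  (∫⁻ x' : Evec d, ∫⁻ u, ENNReal.ofReal (|f x' u| ^ p) ∂(sphereM (d + 1))) ^ (1 / p)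

/-- `f ∈ L^p(ℝ^{m-1}×𝔹^m, ℋ_k)` (`m = d+1`). -/
def MemLpH (d k : ℕ) (p : ℝ) (f : Evec d → Evec (d + 1) → ℝ) : Prop :=
  Measurable (fun q : Evec d × Evec (d + 1) => f q.1 q.2) ∧
  (∀ x' : Evec d, ∃ q, IsHk (d + 1) k q ∧
    ∀ u ∈ closedBall (0 : Evec (d + 1)) 1, f x' u = q u) ∧
  lpH d p f < ⊤

/-- The `L^p` norm `(∫_{𝕊^{m-1}} ∫_{𝕊^{m-1}} |h(ζ,ω)|^p dS(ω) dS(ζ))^{1/p}`,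
valued in `ℝ≥0∞`. -/
def lpS (m : ℕ) (p : ℝ) (h : Evec m → Evec m → ℝ) : ENNReal :=
  (∫⁻ ζ, ∫⁻ ω, ENNReal.ofReal (|h ζ ω| ^ p) ∂(sphereM m) ∂(sphereM m)) ^ (1 / p)

/-- `h ∈ L^p(𝕊^{m-1}×𝔹^m, ℋ_k)`. -/
def MemLpS (m k : ℕ) (p : ℝ) (h : Evec m → Evec m → ℝ) : Prop :=
  Measurable (fun q : Evec m × Evec m => h q.1 q.2) ∧
  (∀ ζ : Evec m, ‖ζ‖ = 1 → ∃ q, IsHk m k q ∧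
    ∀ ω ∈ closedBall (0 : Evec m) 1, h ζ ω = q ω) ∧
  lpS m p h < ⊤

/-- Iterated partial derivative `D_x^α` in the first variable, for a multi-index `α ∈ ℕ^m`. -/
def Dx {m : ℕ} (α : Fin m → ℕ) (f : Evec m → Evec m → ℝ) : Evec m → Evec m → ℝ :=
  (List.finRange m).foldr (fun i g => (pd1 i)^[α i] g) f

/-- Iterated partial derivative `D_ν^β` in the second variable, for a multi-index `β ∈ ℕ^m`. -/
def Dv {m : ℕ} (β : Fin m → ℕ) (f : Evec m → Evec m → ℝ) : Evec m → Evec m → ℝ :=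
  (List.finRange m).foldr (fun i g => (pd2 i)^[β i] g) f

section Helpers

open scoped ContDiff
open MvPolynomial

section Algebra

theorem ladder_relation {M : Type*} [AddCommGroup M] [Module ℝ M] (D X Q L : M →ₗ[ℝ] M)
    (hDX : ∀ S, D (X S) = L S + X (D S)) (hDQ : ∀ S, D (Q S) = (2 : ℝ) • X S + Q (D S))
    (hDL : ∀ S, D (L S) = L (D S)) (a : ℝ) (T : M)
    (h0 : (a * (a - 2)) • L T - (4 * (a - 2)) • X (D T) + (4 : ℝ) • Q (D (D T)) = 0) (n : ℕ) :
    ((a - 2 * n) * (a - 2 - 2 * n)) • L (D^[n] T) - (4 * (a - 2 - 2 * n)) • X (D^[n + 1] T)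
      + (4 : ℝ) • Q (D^[n + 2] T) = 0 := by
  induction n with
  | zero => simpa using h0
  | succ n ih =>
    have h := congrArg D ih
    simp only [map_add, map_sub, map_smul, hDX, hDQ, hDL, map_zero,
      ← Function.iterate_succ_apply' (f := D)] at h
    push_cast
    rw [← h]
    module

theorem ladder_vanishing {M : Type*} [AddCommGroup M] [Module ℝ M] (D X Q L : M →ₗ[ℝ] M)
    (hDX : ∀ S, D (X S) = L S + X (D S)) (hDQ : ∀ S, D (Q S) = (2 : ℝ) • X S + Q (D S))
    (hDL : ∀ S, D (L S) = L (D S)) (hXL : ∀ S, X (L S) = L (X S))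
    (hQL : ∀ S, Q (L S) = L (Q S)) (m k : ℕ) (hm : 4 < m) (T : M)
    (h0 : (((m : ℝ) + 2 * k - 2) * ((m : ℝ) + 2 * k - 2 - 2)) • L T
      - (4 * ((m : ℝ) + 2 * k - 2 - 2)) • X (D T) + (4 : ℝ) • Q (D (D T)) = 0)
    (hnil : D^[k + 1] T = 0) : L^[k + 1] T = 0 := by
  have hrel := ladder_relation D X Q L hDX hDQ hDL _ T h0
  have hX : ∀ j S, L^[j] (X S) = X (L^[j] S) := fun j =>
    Function.Commute.iterate_left (f := L) (g := X) (fun S => (hXL S).symm) j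
  have hQ : ∀ j S, L^[j] (Q S) = Q (L^[j] S) := fun j =>
    Function.Commute.iterate_left (f := L) (g := Q) (fun S => (hQL S).symm) j
  have key : ∀ n ≤ k + 1, L^[k + 1 - n] (D^[n] T) = 0 ∧ L^[k + 1 - n] (D^[n + 1] T) = 0 := by
    intro n hn
    induction hn using Nat.decreasingInduction with
    | self =>
      rw [Function.iterate_succ_apply' D (k + 1), hnil]
      simp
    | of_succ n hn ih =>
      have e : k + 1 - n = (k + 1 - (n + 1)) + 1 := by omega
      have hz : ∀ S, L^[k + 1 - (n + 1)] S = 0 → L^[k + 1 - n] S = 0 := fun S hS => by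
        rw [e, Function.iterate_succ_apply', hS, map_zero]
      refine ⟨?_, hz _ ih.1⟩
      have h := congrArg (⇑(L ^ (k + 1 - (n + 1)))) (hrel n)
      simp only [map_add, map_sub, map_smul, map_zero, Module.End.pow_apply, hX, hQ, ih.1, ih.2,
        smul_zero, sub_zero, add_zero] at h
      rw [e, Function.iterate_succ_apply]
      refine (smul_eq_zero.mp h).resolve_left ?_
      have h1 : (n : ℝ) ≤ k := by exact_mod_cast (by omega : n ≤ k)
      have h2 : (4 : ℝ) < m := by exact_mod_cast hm
      exact mul_ne_zero (by nlinarith) (by nlinarith)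
  simpa using (key 0 (by omega)).1

theorem totalDegree_pderiv_le_pred {σ : Type*} (p : MvPolynomial σ ℝ) (i : σ) :
    (pderiv i p).totalDegree ≤ p.totalDegree - 1 := by
  rw [p.as_sum, map_sum]
  conv_rhs => rw [← p.as_sum]
  refine totalDegree_finsetSum_le fun s hs => ?_
  rw [pderiv_monomial]
  have h := le_totalDegree hs
  by_cases hsi : s i = 0
  · simp [hsi]
  refine (totalDegree_monomial_le _ _).trans ?_
  have h2 : s - Finsupp.single i 1 + Finsupp.single i 1 = s :=
    tsub_add_cancel_of_le (Finsupp.single_le_iff.mpr (Nat.one_le_iff_ne_zero.mpr hsi))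
  have h3 : (s.sum fun _ e => e) = ((s - Finsupp.single i 1).sum fun _ e => e) + 1 := by
    conv_lhs => rw [← h2]
    rw [Finsupp.sum_add_index' (fun _ => rfl) (fun _ _ _ => rfl)]
    simp
  simp only [Function.id_def]
  omega

section Operators

variable {m : ℕ} {A : Type*} (d : Fin m → A → A)

/-- The operator `S ↦ ∑ⱼ ∂ⱼ ∘ S ∘ dⱼ`. -/
def opD : (A → MvPolynomial (Fin m) ℝ) →ₗ[ℝ] (A → MvPolynomial (Fin m) ℝ) where
  toFun S φ := ∑ j, pderiv j (S (d j φ))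
  map_add' S S' := by ext1 φ; simp [Finset.sum_add_distrib]
  map_smul' c S := by ext1 φ; simp [Finset.smul_sum]

/-- The operator `S ↦ ∑ᵢ Xᵢ · (S ∘ dᵢ)`. -/
def opX : (A → MvPolynomial (Fin m) ℝ) →ₗ[ℝ] (A → MvPolynomial (Fin m) ℝ) where
  toFun S φ := ∑ i, X i * S (d i φ)
  map_add' S S' := by ext1 φ; simp [Finset.sum_add_distrib, mul_add]
  map_smul' c S := by ext1 φ; simp [Finset.smul_sum]

/-- Multiplication by `|X|²`. -/
def opQ (m : ℕ) (A : Type*) :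
    (A → MvPolynomial (Fin m) ℝ) →ₗ[ℝ] (A → MvPolynomial (Fin m) ℝ) where
  toFun S φ := (∑ i, X i ^ 2) * S φ
  map_add' S S' := by ext1 φ; simp [mul_add]
  map_smul' c S := by ext1 φ; simp

/-- The operator `S ↦ ∑ᵢ S ∘ dᵢ ∘ dᵢ`. -/
def opL : (A → MvPolynomial (Fin m) ℝ) →ₗ[ℝ] (A → MvPolynomial (Fin m) ℝ) where
  toFun S φ := ∑ i, S (d i (d i φ))
  map_add' S S' := by ext1 φ; simp [Finset.sum_add_distrib]
  map_smul' c S := by ext1 φ; simp [Finset.smul_sum]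

theorem opD_apply (S : A → MvPolynomial (Fin m) ℝ) (φ : A) :
    opD d S φ = ∑ j, pderiv j (S (d j φ)) := rfl

theorem opX_apply (S : A → MvPolynomial (Fin m) ℝ) (φ : A) :
    opX d S φ = ∑ i, X i * S (d i φ) := rfl

theorem opQ_apply (S : A → MvPolynomial (Fin m) ℝ) (φ : A) :
    opQ m A S φ = (∑ i, X i ^ 2) * S φ := rfl

theorem opL_apply (S : A → MvPolynomial (Fin m) ℝ) (φ : A) :
    opL d S φ = ∑ i, S (d i (d i φ)) := rfl

variable {d}

theorem opD_opX (hd : ∀ i j φ, d i (d j φ) = d j (d i φ)) (S : A → MvPolynomial (Fin m) ℝ) :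
    opD d (opX d S) = opL d S + opX d (opD d S) := by
  ext1 φ
  simp only [opD_apply, opX_apply, opL_apply, Pi.add_apply, map_sum, Derivation.leibniz, pderiv_X,
    smul_eq_mul, Finset.sum_add_distrib, Finset.mul_sum]
  rw [add_comm]
  refine congrArg₂ (· + ·) ?_ ?_
  · refine Finset.sum_congr rfl fun j _ => ?_
    simp [Pi.single_apply]
  · rw [Finset.sum_comm]
    refine Finset.sum_congr rfl fun i _ => Finset.sum_congr rfl fun j _ => ?_
    rw [hd i j]

theorem opD_opQ (S : A → MvPolynomial (Fin m) ℝ) :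
    opD d (opQ m A S) = (2 : ℝ) • opX d S + opQ m A (opD d S) := by
  ext1 φ
  simp only [opD_apply, opX_apply, opQ_apply, Pi.add_apply, Pi.smul_apply, Derivation.leibniz,
    smul_eq_mul, Finset.sum_add_distrib, Finset.mul_sum, Finset.smul_sum]
  rw [add_comm]
  refine congrArg (· + _) (Finset.sum_congr rfl fun j _ => ?_)
  have h : pderiv j (∑ i : Fin m, (X i : MvPolynomial (Fin m) ℝ) ^ 2) = 2 * X j := by
    simp [map_sum, Derivation.leibniz_pow, Pi.single_apply, two_mul]
  rw [h, two_smul]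
  ring

theorem opD_opL (hd : ∀ i j φ, d i (d j φ) = d j (d i φ)) (S : A → MvPolynomial (Fin m) ℝ) :
    opD d (opL d S) = opL d (opD d S) := by
  ext1 φ
  simp only [opD_apply, opL_apply, map_sum]
  rw [Finset.sum_comm]
  refine Finset.sum_congr rfl fun i _ => Finset.sum_congr rfl fun j _ => ?_
  rw [hd i j, hd i j]

theorem opX_opL (hd : ∀ i j φ, d i (d j φ) = d j (d i φ)) (S : A → MvPolynomial (Fin m) ℝ) :
    opX d (opL d S) = opL d (opX d S) := by
  ext1 φ
  simp only [opX_apply, opL_apply, Finset.mul_sum]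
  rw [Finset.sum_comm]
  refine Finset.sum_congr rfl fun i _ => Finset.sum_congr rfl fun j _ => ?_
  rw [hd i j, hd i j]

theorem opQ_opL (S : A → MvPolynomial (Fin m) ℝ) :
    opQ m A (opL d S) = opL d (opQ m A S) := by
  ext1 φ
  simp only [opQ_apply, opL_apply, Finset.mul_sum]

theorem opD_iterate_eq_zero (k : ℕ) (T : A → MvPolynomial (Fin m) ℝ)
    (hdeg : ∀ φ, (T φ).totalDegree ≤ k) : (opD d)^[k + 1] T = 0 := by
  have hlow : ∀ n ≤ k, ∀ φ, ((opD d)^[n] T φ).totalDegree ≤ k - n := by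
    intro n hn
    induction n with
    | zero => simpa using hdeg
    | succ n ih =>
      intro φ
      rw [Function.iterate_succ_apply', opD_apply]
      refine totalDegree_finsetSum_le fun j _ => ?_
      refine (totalDegree_pderiv_le_pred _ _).trans ?_
      have := ih (by omega) (d j φ)
      omega
  rw [Function.iterate_succ_apply']
  ext1 φ
  rw [opD_apply]
  refine Finset.sum_eq_zero fun j _ => ?_
  have h := hlow k le_rfl (d j φ)
  rw [Nat.sub_self, Nat.le_zero, totalDegree_eq_zero_iff_eq_C] at h
  rw [h, pderiv_C]

/-- A polynomial-valued functional annihilated by the bosonic Laplacian is polyharmonic. -/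
theorem opL_iterate_eq_zero_of_bosonic (hd : ∀ i j φ, d i (d j φ) = d j (d i φ)) (k : ℕ)
    (hm : 4 < m) (T : A → MvPolynomial (Fin m) ℝ) (hdeg : ∀ φ, (T φ).totalDegree ≤ k)
    (h0 : ∀ φ, (((m : ℝ) + 2 * k - 2) * ((m : ℝ) + 2 * k - 4)) • ∑ i, T (d i (d i φ))
      - (4 * ((m : ℝ) + 2 * k - 4)) • ∑ i, ∑ j, X i * pderiv j (T (d j (d i φ)))
      + (4 : ℝ) • ((∑ i, X i ^ 2) * ∑ i, ∑ j, pderiv i (pderiv j (T (d j (d i φ))))) = 0) :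
    (opL d)^[k + 1] T = 0 := by
  refine ladder_vanishing (opD d) (opX d) (opQ m A) (opL d) (opD_opX hd) opD_opQ (opD_opL hd)
    (opX_opL hd) opQ_opL m k hm T ?_ (opD_iterate_eq_zero k T hdeg)
  ext1 φ
  have e : (m : ℝ) + 2 * k - 2 - 2 = m + 2 * k - 4 := by ring
  rw [e, Pi.zero_apply, ← h0 φ]
  simp only [Pi.add_apply, Pi.sub_apply, Pi.smul_apply, opL_apply, opX_apply, opQ_apply,
    opD_apply, map_sum, Finset.mul_sum]

end Operators

end Algebra

section PolynomialFunctions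

theorem eval_smul_of_isHomogeneous {m n : ℕ} {P : MvPolynomial (Fin m) ℝ} (hP : P.IsHomogeneous n)
    (c : ℝ) (x : Fin m → ℝ) : eval (fun i => c * x i) P = c ^ n * eval x P := by
  rw [eval_eq', eval_eq', Finset.mul_sum]
  refine Finset.sum_congr rfl fun d hd => ?_
  have h := hP (mem_support_iff.mp hd)
  have h2 : ∑ i, d i = n := by
    rw [← h, Finsupp.weight_apply, Finsupp.sum_fintype _ _ (by simp)]
    simp
  simp only [mul_pow, Finset.prod_mul_distrib, Finset.prod_pow_eq_pow_sum, h2]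
  ring

theorem IsHk.exists_totalDegree_le {m k : ℕ} {q : Evec m → ℝ} (hq : IsHk m k q) :
    ∃ P : MvPolynomial (Fin m) ℝ, P.totalDegree ≤ k ∧
      ∀ x : Evec m, q x = eval (fun i => x i) P := by
  obtain ⟨⟨P, hP⟩, hhom, -⟩ := hq
  refine ⟨homogeneousComponent k P, (homogeneousComponent_isHomogeneous k P).totalDegree_le,
    fun x => ?_⟩
  set N := max P.totalDegree k + 1
  let G : Polynomial ℝ := ∑ n ∈ Finset.range N,
    Polynomial.monomial n (eval (fun i => x i) (homogeneousComponent n P))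
  have hsum : ∑ n ∈ Finset.range N, homogeneousComponent n P = P := by
    conv_rhs => rw [← sum_homogeneousComponent P]
    symm
    refine Finset.sum_subset (Finset.range_subset_range.mpr (by omega)) fun n _ hn => ?_
    exact homogeneousComponent_eq_zero _ _ (by simpa using hn)
  have hG : G = Polynomial.monomial k (q x) := by
    refine Polynomial.funext fun c => ?_
    have h1 : q (c • x) = ∑ n ∈ Finset.range N,
        c ^ n * eval (fun i => x i) (homogeneousComponent n P) := by
      rw [hP]
      conv_lhs => rw [← hsum]
      rw [map_sum]
      exact Finset.sum_congr rfl fun n _ => by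
        rw [← eval_smul_of_isHomogeneous (homogeneousComponent_isHomogeneous n P)]; simp
    rw [Polynomial.eval_finsetSum, Polynomial.eval_monomial, mul_comm, ← hhom, h1]
    exact Finset.sum_congr rfl fun n _ => by rw [Polynomial.eval_monomial, mul_comm]
  have h := congrArg (fun G => Polynomial.coeff G k) hG
  simpa [G, Polynomial.coeff_monomial, Polynomial.finsetSum_coeff, N] using h.symm

theorem eq_zero_of_eval_ball {m : ℕ} {P : MvPolynomial (Fin m) ℝ}
    (h : ∀ u ∈ ball (0 : Evec m) 1, eval (fun i => u i) P = 0) : P = 0 := by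
  have hc : Continuous (fun v : Fin m → ℝ => (WithLp.toLp 2 v : Evec m)) :=
    PiLp.continuous_toLp 2 _
  obtain ⟨ε, hε, hb⟩ := Metric.isOpen_iff.mp (isOpen_ball.preimage hc (t := ball (0 : Evec m) 1)) 0
    (by simp)
  refine funext_set (fun _ => Set.Ioo (-ε) ε) (fun _ => Set.Ioo_infinite (by linarith)) ?_
  intro x hx
  rw [map_zero]
  refine h (WithLp.toLp 2 x) (hb ?_)
  rw [mem_ball, dist_zero_right, pi_norm_lt_iff hε]
  intro i
  rw [Real.norm_eq_abs, abs_lt]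
  exact hx i trivial

/-- Evaluation at a point as a functional on polynomials of degree at most `k`. -/
def evalFunctional (m k : ℕ) (u : Evec m) : Module.Dual ℝ (restrictTotalDegree (Fin m) ℝ k) :=
  (aeval (fun i => u i) : MvPolynomial (Fin m) ℝ →ₐ[ℝ] ℝ).toLinearMap ∘ₗ
    (restrictTotalDegree (Fin m) ℝ k).subtype

theorem evalFunctional_apply (m k : ℕ) (u : Evec m) (P : restrictTotalDegree (Fin m) ℝ k) :
    evalFunctional m k u P = eval (fun i => u i) P.1 := by
  simp [evalFunctional, aeval_eq_eval]

theorem span_evalFunctional (m k : ℕ) :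
    Submodule.span ℝ (Set.range fun u : ball (0 : Evec m) 1 => evalFunctional m k u) = ⊤ := by
  set W := Submodule.span ℝ (Set.range fun u : ball (0 : Evec m) 1 => evalFunctional m k u)
  have h : W.dualCoannihilator = ⊥ := by
    rw [eq_bot_iff]
    intro P hP
    rw [Submodule.mem_dualCoannihilator] at hP
    refine Subtype.ext (eq_zero_of_eval_ball fun u hu => ?_)
    rw [← evalFunctional_apply]
    exact hP _ (Submodule.subset_span ⟨⟨u, hu⟩, rfl⟩)
  rw [← Subspace.dualCoannihilator_dualAnnihilator_eq (W := W), h, Submodule.dualAnnihilator_bot]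

theorem exists_interpolation (m k : ℕ) : ∃ (ι : Type) (_ : Fintype ι) (u : ι → Evec m)
    (p : ι → MvPolynomial (Fin m) ℝ), (∀ i, u i ∈ ball (0 : Evec m) 1) ∧
    (∀ i, (p i).totalDegree ≤ k) ∧
    ∀ P : MvPolynomial (Fin m) ℝ, P.totalDegree ≤ k →
      P = ∑ i, C (eval (fun j => u i j) P) * p i := by
  let b := Module.finBasis ℝ (restrictTotalDegree (Fin m) ℝ k)
  have hw : ∀ j, ∃ w : ball (0 : Evec m) 1 →₀ ℝ,
      (w.sum fun u a => a • evalFunctional m k u) = b.coord j := fun j =>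
    Finsupp.mem_span_range_iff_exists_finsupp.mp (by rw [span_evalFunctional]; trivial)
  choose w hw using hw
  refine ⟨Σ j, (w j).support, inferInstance, fun r => r.2.1.1,
    fun r => C (w r.1 r.2.1) * (b r.1).1, fun r => r.2.1.2, fun r => ?_, fun P hP => ?_⟩
  · beta_reduce
    rw [← smul_eq_C_mul]
    exact (totalDegree_smul_le _ _).trans ((mem_restrictTotalDegree _ _ _).mp (b r.1).2)
  · have h := congrArg Subtype.val
      (b.sum_repr ⟨P, (mem_restrictTotalDegree _ _ _).mpr hP⟩)
    rw [Submodule.coe_sum] at h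
    refine h.symm.trans ?_
    rw [Fintype.sum_sigma]
    refine Finset.sum_congr rfl fun j _ => ?_
    rw [Submodule.coe_smul, ← Module.Basis.coord_apply, ← hw j, Finsupp.sum, LinearMap.sum_apply,
      Finset.sum_smul, ← Finset.sum_coe_sort]
    refine Finset.sum_congr rfl fun u _ => ?_
    simp only [LinearMap.smul_apply, evalFunctional_apply, smul_eq_C_mul, smul_eq_mul, map_mul]
    ring

theorem continuous_evalAt {m : ℕ} (P : MvPolynomial (Fin m) ℝ) :
    Continuous fun u : Evec m => eval (fun i => u i) P := by
  exact (MvPolynomial.continuous_eval P).comp (by fun_prop)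

theorem integrableOn_eval {m : ℕ} (P : MvPolynomial (Fin m) ℝ) :
    Integrable (fun u : Evec m => eval (fun i => u i) P) (volume.restrict (ball 0 1)) :=
  ((continuous_evalAt P).continuousOn.integrableOn_compact
    (isCompact_closedBall (0 : Evec m) 1)).mono_set ball_subset_closedBall

/-- A polynomial as an element of `L¹` of the unit ball. -/
def polyL1 (m : ℕ) : MvPolynomial (Fin m) ℝ →ₗ[ℝ]
    ((Evec m) →₁[volume.restrict (ball (0 : Evec m) 1)] ℝ) where
  toFun P := (integrableOn_eval P).toL1 _
  map_add' P Q := by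
    rw [← Integrable.toL1_add]
    congr 1
    ext u
    simp
  map_smul' c P := by
    rw [RingHom.id_apply, ← Integrable.toL1_smul]
    congr 1
    ext u
    simp [smul_eval]

theorem norm_polyL1 {m : ℕ} (P : MvPolynomial (Fin m) ℝ) :
    ‖polyL1 m P‖ = ∫ u in ball (0 : Evec m) 1, |eval (fun i => u i) P| :=
  L1.norm_of_fun_eq_integral_norm (integrableOn_eval P)

theorem polyL1_injective (m : ℕ) : Function.Injective (polyL1 m) := by
  rw [← LinearMap.ker_eq_bot, LinearMap.ker_eq_bot']
  intro P hP
  have h : (fun u : Evec m => eval (fun i => u i) P) =ᵐ[volume.restrict (ball 0 1)] 0 := by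
    have h1 := (integrableOn_eval P).coeFn_toL1
    have h2 : (integrableOn_eval P).toL1 _ = 0 := hP
    rw [h2] at h1
    exact h1.symm.trans (Lp.coeFn_zero _ _ _)
  refine eq_zero_of_eval_ball fun u hu => ?_
  exact Measure.eqOn_open_of_ae_eq h isOpen_ball (continuous_evalAt P).continuousOn
    continuousOn_const hu

theorem abs_eval_le_integral (m k : ℕ) (u : Evec m) : ∃ c : ℝ, 0 ≤ c ∧
    ∀ P : MvPolynomial (Fin m) ℝ, P.totalDegree ≤ k →
      |eval (fun i => u i) P| ≤ c * ∫ v in ball (0 : Evec m) 1, |eval (fun i => v i) P| := by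
  let Λ := (polyL1 m).domRestrict (restrictTotalDegree (Fin m) ℝ k)
  have hΛ : Function.Injective Λ := (polyL1_injective m).comp Subtype.val_injective
  let e := LinearEquiv.ofInjective Λ hΛ
  have : FiniteDimensional ℝ (LinearMap.range Λ) := inferInstance
  let g : LinearMap.range Λ →L[ℝ] ℝ :=
    LinearMap.toContinuousLinearMap (evalFunctional m k u ∘ₗ e.symm.toLinearMap)
  refine ⟨‖g‖, g.opNorm_nonneg, fun P hP => ?_⟩
  have h := g.le_opNorm (e ⟨P, (mem_restrictTotalDegree _ _ _).mpr hP⟩)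
  have hg : g (e ⟨P, (mem_restrictTotalDegree _ _ _).mpr hP⟩) = eval (fun i => u i) P := by
    simp [g, evalFunctional_apply]
  rw [hg, Real.norm_eq_abs] at h
  rw [← norm_polyL1]
  exact h

end PolynomialFunctions

section Profiles

/-- Profiles of radial test functions: smooth functions vanishing near `+∞`. -/
def IsProfile (g : ℝ → ℝ) : Prop := ContDiff ℝ ∞ g ∧ ∃ S : ℝ, ∀ s, S ≤ s → g s = 0

/-- The Laplacian of `ℝ^m` acting on profiles in the variable `s = |y|²`. -/
def profileLap (m : ℕ) (g : ℝ → ℝ) : ℝ → ℝ := fun s => 4 * s * deriv (deriv g) s + 2 * m * deriv g s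

/-- The generator of the mass-preserving dilations acting on profiles. -/
def profileDil (m : ℕ) (g : ℝ → ℝ) : ℝ → ℝ := fun s => -(m * g s + 2 * s * deriv g s)

theorem contDiff_deriv {g : ℝ → ℝ} (hg : ContDiff ℝ ∞ g) : ContDiff ℝ ∞ (deriv g) :=
  (contDiff_infty_iff_deriv.mp hg).2

theorem smooth_hasDerivAt {g : ℝ → ℝ} (hg : ContDiff ℝ ∞ g) (s : ℝ) :
    HasDerivAt g (deriv g s) s :=
  ((hg.differentiable (by simp)) s).hasDerivAt

theorem IsProfile.deriv {g : ℝ → ℝ} (hg : IsProfile g) : IsProfile (deriv g) := by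
  obtain ⟨h, S, hS⟩ := hg
  refine ⟨contDiff_deriv h, S + 1, fun s hs => ?_⟩
  have h1 : g =ᶠ[𝓝 s] fun _ => 0 := by
    filter_upwards [lt_mem_nhds (show S < s by linarith)] with t ht using hS t ht.le
  rw [h1.deriv_eq, deriv_const]

theorem IsProfile.mul_left {g : ℝ → ℝ} (hg : IsProfile g) {p : ℝ → ℝ} (hp : ContDiff ℝ ∞ p) :
    IsProfile fun s => p s * g s := by
  obtain ⟨h, S, hS⟩ := hg
  exact ⟨hp.mul h, S, fun s hs => by simp [hS s hs]⟩

theorem IsProfile.add {g h : ℝ → ℝ} (hg : IsProfile g) (hh : IsProfile h) :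
    IsProfile fun s => g s + h s := by
  obtain ⟨h, S, hS⟩ := hg
  obtain ⟨h', S', hS'⟩ := hh
  exact ⟨h.add h', max S S', fun s hs => by
    simp [hS s ((le_max_left _ _).trans hs), hS' s ((le_max_right _ _).trans hs)]⟩

theorem IsProfile.sum {ι : Type*} (t : Finset ι) {g : ι → ℝ → ℝ} (hg : ∀ i ∈ t, IsProfile (g i)) :
    IsProfile fun s => ∑ i ∈ t, g i s := by
  classical
  induction t using Finset.induction_on with
  | empty => exact ⟨by simpa using contDiff_const, 0, fun s _ => by simp⟩
  | insert i t hi ih =>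
    simp only [Finset.sum_insert hi]
    exact (hg i (by simp)).add (ih fun j hj => hg j (by simp [hj]))

theorem IsProfile.comp_div {g : ℝ → ℝ} (hg : IsProfile g) {c : ℝ} (hc : 0 < c) :
    IsProfile fun s => g (s / c) := by
  obtain ⟨h, S, hS⟩ := hg
  exact ⟨h.comp (by fun_prop), S * c, fun s hs => hS _ ((le_div_iff₀ hc).mpr hs)⟩

theorem IsProfile.profileLap (m : ℕ) {g : ℝ → ℝ} (hg : IsProfile g) :
    IsProfile (profileLap m g) :=
  (hg.deriv.deriv.mul_left (p := fun s => 4 * s) (by fun_prop)).add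
    (hg.deriv.mul_left (p := fun _ => 2 * m) (by fun_prop))

theorem IsProfile.profileLap_iterate (m : ℕ) {g : ℝ → ℝ} (hg : IsProfile g) (j : ℕ) :
    IsProfile ((_root_.profileLap m)^[j] g) := by
  induction j with
  | zero => exact hg
  | succ j ih => rw [Function.iterate_succ_apply']; exact ih.profileLap m

theorem profileLap_add_smul (m : ℕ) {g h : ℝ → ℝ} (hg : ContDiff ℝ ∞ g) (hh : ContDiff ℝ ∞ h)
    (c : ℝ) : profileLap m (fun s => g s + c * h s) =
      fun s => profileLap m g s + c * profileLap m h s := by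
  have d1 : deriv (fun s => g s + c * h s) = fun s => deriv g s + c * deriv h s := by
    ext s
    exact ((smooth_hasDerivAt hg s).add ((smooth_hasDerivAt hh s).const_mul c)).deriv
  have d2 : deriv (fun s => deriv g s + c * deriv h s) =
      fun s => deriv (deriv g) s + c * deriv (deriv h) s := by
    ext s
    exact ((smooth_hasDerivAt (contDiff_deriv hg) s).add
      ((smooth_hasDerivAt (contDiff_deriv hh) s).const_mul c)).deriv
  ext s
  simp only [profileLap, d1, d2]
  ring

theorem profileDil_profileLap (m : ℕ) {g : ℝ → ℝ} (hg : ContDiff ℝ ∞ g) :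
    profileDil m (profileLap m g) =
      fun s => profileLap m (profileDil m g) s + 2 * profileLap m g s := by
  have h1 := contDiff_deriv hg
  have h2 := contDiff_deriv h1
  have dL : ∀ s, deriv (profileLap m g) s =
      4 * deriv (deriv g) s + 4 * s * deriv (deriv (deriv g)) s + 2 * m * deriv (deriv g) s := by
    intro s
    refine HasDerivAt.deriv ?_
    have := ((((hasDerivAt_id s).const_mul 4).mul (smooth_hasDerivAt h2 s)).add
      ((smooth_hasDerivAt h1 s).const_mul (2 * (m : ℝ))))
    exact this.congr_deriv (by simp)
  have dD : deriv (profileDil m g) =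
      fun s => -((m + 2) * deriv g s + 2 * s * deriv (deriv g) s) := by
    ext s
    refine HasDerivAt.deriv ?_
    have := (((smooth_hasDerivAt hg s).const_mul (m : ℝ)).add
      (((hasDerivAt_id s).const_mul 2).mul (smooth_hasDerivAt h1 s))).neg
    exact this.congr_deriv (by simp; ring)
  have dDD : ∀ s, deriv (fun s => -(((m : ℝ) + 2) * deriv g s + 2 * s * deriv (deriv g) s)) s =
      -((m + 4) * deriv (deriv g) s + 2 * s * deriv (deriv (deriv g)) s) := by
    intro s
    refine HasDerivAt.deriv ?_
    have := (((smooth_hasDerivAt h1 s).const_mul ((m : ℝ) + 2)).add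
      (((hasDerivAt_id s).const_mul 2).mul (smooth_hasDerivAt h2 s))).neg
    exact this.congr_deriv (by simp; ring)
  ext s
  rw [profileDil, dL, profileLap, profileLap, dD, dDD]
  ring

theorem profileDil_eq_profileLap (m : ℕ) {g G : ℝ → ℝ} (hg : ContDiff ℝ ∞ g)
    (hG : ∀ s, HasDerivAt G (-(g s) / 2) s) : profileDil m g = profileLap m G := by
  have d1 : deriv G = fun s => -(g s) / 2 := funext fun s => (hG s).deriv
  have d2 : deriv (fun s => -(g s) / 2) = fun s => -(deriv g s) / 2 := funext fun s =>
    ((smooth_hasDerivAt hg s).neg.div_const 2).deriv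
  ext s
  rw [profileDil, profileLap, d1, d2]
  ring

theorem profileDil_profileLap_iterate (m : ℕ) {g G : ℝ → ℝ} (hg : IsProfile g) (hG' : IsProfile G)
    (hG : ∀ s, HasDerivAt G (-(g s) / 2) s) (j : ℕ) :
    profileDil m ((profileLap m)^[j] g) =
      fun s => (profileLap m)^[j + 1] G s + (2 * j) * (profileLap m)^[j] g s := by
  induction j with
  | zero => simpa using profileDil_eq_profileLap m hg.1 hG
  | succ j ih =>
    rw [Function.iterate_succ_apply', profileDil_profileLap m (hg.profileLap_iterate m j).1, ih,
      profileLap_add_smul m (hG'.profileLap_iterate m (j + 1)).1 (hg.profileLap_iterate m j).1]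
    ext s
    rw [← Function.iterate_succ_apply' (profileLap m) (j + 1)]
    push_cast
    ring

theorem IsProfile.exists_antideriv {g : ℝ → ℝ} (hg : IsProfile g) :
    ∃ G, IsProfile G ∧ ∀ s, HasDerivAt G (-(g s) / 2) s := by
  obtain ⟨h, S, hS⟩ := hg
  have hc : Continuous fun s => -(g s) / 2 := by have := h.continuous; fun_prop
  have hd : ∀ s, HasDerivAt (fun s => ∫ t in S..s, -(g t) / 2) (-(g s) / 2) s := fun s =>
    (hc.integral_hasStrictDerivAt S s).hasDerivAt
  refine ⟨fun s => ∫ t in S..s, -(g t) / 2, ⟨?_, S, fun s hs => ?_⟩, hd⟩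
  · rw [contDiff_infty_iff_deriv]
    refine ⟨fun s => (hd s).differentiableAt, ?_⟩
    rw [show _root_.deriv (fun s => ∫ t in S..s, -(g t) / 2) = fun s => -(g s) / 2 from
      funext fun s => (hd s).deriv]
    fun_prop
  · have : ∫ t in S..s, -(g t) / 2 = ∫ t in S..s, (0 : ℝ) := by
      refine intervalIntegral.integral_congr fun t ht => ?_
      rw [Set.uIcc_of_le hs] at ht
      simp [hS t ht.1]
    exact this.trans (by simp)

end Profiles

section Radial

variable {m : ℕ}

theorem pdv_eq_of_hasFDerivAt {f : Evec m → ℝ} {f' : Evec m →L[ℝ] ℝ} {x : Evec m}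
    (h : HasFDerivAt f f' x) (i : Fin m) : pdv i f x = f' (EuclideanSpace.single i 1) := by
  rw [pdv, h.fderiv]

theorem hasFDerivAt_coord (i : Fin m) (x : Evec m) :
    HasFDerivAt (fun y : Evec m => y i) (EuclideanSpace.proj i : Evec m →L[ℝ] ℝ) x :=
  (EuclideanSpace.proj i : Evec m →L[ℝ] ℝ).hasFDerivAt

theorem hasFDerivAt_radial {g : ℝ → ℝ} (hg : ContDiff ℝ ∞ g) (x y : Evec m) :
    HasFDerivAt (fun y : Evec m => g (‖y - x‖ ^ 2))
      (deriv g (‖y - x‖ ^ 2) • (2 • innerSL ℝ (y - x))) y := by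
  have h1 : HasFDerivAt (fun y : Evec m => ‖y - x‖ ^ 2) (2 • innerSL ℝ (y - x)) y := by
    have := (hasStrictFDerivAt_norm_sq (y - x)).hasFDerivAt.comp y
      ((hasFDerivAt_id (𝕜 := ℝ) y).sub_const x)
    refine this.congr_fderiv ?_
    ext z
    simp
  exact (smooth_hasDerivAt hg _).comp_hasFDerivAt y h1

theorem pdv_radial {g : ℝ → ℝ} (hg : ContDiff ℝ ∞ g) (x : Evec m) (i : Fin m) :
    pdv i (fun y : Evec m => g (‖y - x‖ ^ 2)) =
      fun y => deriv g (‖y - x‖ ^ 2) * (2 * (y i - x i)) := by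
  ext y
  rw [pdv_eq_of_hasFDerivAt (hasFDerivAt_radial hg x y)]
  simp [EuclideanSpace.inner_single_right]

theorem lapl_radial {g : ℝ → ℝ} (hg : ContDiff ℝ ∞ g) (x : Evec m) :
    lapl (fun y : Evec m => g (‖y - x‖ ^ 2)) = fun y => profileLap m g (‖y - x‖ ^ 2) := by
  ext y
  have h : ∀ i, pdv i (pdv i (fun y : Evec m => g (‖y - x‖ ^ 2))) y =
      4 * (y i - x i) ^ 2 * deriv (deriv g) (‖y - x‖ ^ 2) + 2 * deriv g (‖y - x‖ ^ 2) := by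
    intro i
    rw [pdv_radial hg]
    have h1 := (hasFDerivAt_radial (contDiff_deriv hg) x y).mul
      (((hasFDerivAt_coord i y).sub_const (x i)).const_mul 2)
    refine (pdv_eq_of_hasFDerivAt h1 i).trans ?_
    simp [EuclideanSpace.inner_single_right]
    ring
  simp only [lapl, h, profileLap, Finset.sum_add_distrib, ← Finset.sum_mul, ← Finset.mul_sum]
  have h2 : ∑ i, (y i - x i) ^ 2 = ‖y - x‖ ^ 2 := by
    simp [EuclideanSpace.real_norm_sq_eq]
  rw [h2]
  simp only [Finset.sum_const, Finset.card_univ, Fintype.card_fin, nsmul_eq_mul]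
  ring

theorem lapl_iterate_radial {g : ℝ → ℝ} (hg : IsProfile g) (x : Evec m) (j : ℕ) :
    lapl^[j] (fun y : Evec m => g (‖y - x‖ ^ 2)) =
      fun y => (profileLap m)^[j] g (‖y - x‖ ^ 2) := by
  induction j with
  | zero => rfl
  | succ j ih =>
    rw [Function.iterate_succ_apply', ih, lapl_radial (hg.profileLap_iterate m j).1,
      Function.iterate_succ_apply']

theorem profileLap_comp_div (m : ℕ) {g : ℝ → ℝ} (hg : ContDiff ℝ ∞ g) (a c : ℝ) :
    profileLap m (fun s => a * g (s / c)) = fun s => (a * c⁻¹) * profileLap m g (s / c) := by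
  have aux : ∀ (b : ℝ) {h : ℝ → ℝ}, ContDiff ℝ ∞ h →
      deriv (fun s => b * h (s / c)) = fun s => (b * c⁻¹) * deriv h (s / c) := by
    intro b h hh
    ext s
    have := ((smooth_hasDerivAt hh (s / c)).comp s ((hasDerivAt_id s).div_const c)).const_mul b
    exact this.deriv.trans (by rw [one_div]; ring)
  have h1 := contDiff_deriv hg
  ext s
  rw [profileLap, profileLap, aux a hg, aux _ h1]
  ring

theorem profileLap_iterate_comp_div (m : ℕ) {g : ℝ → ℝ} (hg : IsProfile g) (c : ℝ) (j : ℕ) :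
    (profileLap m)^[j] (fun s => g (s / c)) =
      fun s => c⁻¹ ^ j * (profileLap m)^[j] g (s / c) := by
  induction j with
  | zero => simp
  | succ j ih =>
    rw [Function.iterate_succ_apply', ih, profileLap_comp_div m (hg.profileLap_iterate m j).1,
      Function.iterate_succ_apply', pow_succ]

theorem IsProfile.contDiff_radial {g : ℝ → ℝ} (hg : IsProfile g) (x : Evec m) :
    ContDiff ℝ ∞ (fun y : Evec m => g (‖y - x‖ ^ 2)) :=
  hg.1.comp ((contDiff_id.sub contDiff_const).norm_sq ℝ)

theorem IsProfile.hasCompactSupport_radial {g : ℝ → ℝ} (hg : IsProfile g) (x : Evec m) :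
    HasCompactSupport (fun y : Evec m => g (‖y - x‖ ^ 2)) := by
  obtain ⟨-, S, hS⟩ := hg
  refine HasCompactSupport.intro (isCompact_closedBall x (1 + |S|)) fun y hy => hS _ ?_
  rw [mem_closedBall, dist_eq_norm, not_le] at hy
  nlinarith [le_abs_self S, abs_nonneg S]

/-- `F` is polyharmonic of order `N` in the sense of distributions. -/
def WeakPolyharmonic (N : ℕ) (F : Evec m → ℝ) : Prop :=
  ∀ φ : Evec m → ℝ, ContDiff ℝ ∞ φ → HasCompactSupport φ → ∫ y, F y * lapl^[N] φ y = 0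

/-- The integral of `F` against the radial function with profile `g`, dilated by `R`. -/
def radialMean (F : Evec m → ℝ) (x : Evec m) (g : ℝ → ℝ) (R : ℝ) : ℝ :=
  ∫ y, F y * g (‖y - x‖ ^ 2 / R ^ 2)

theorem radialMean_profileLap_iterate_eq_zero {N : ℕ} {F : Evec m → ℝ} (hF : WeakPolyharmonic N F)
    (x : Evec m) {g : ℝ → ℝ} (hg : IsProfile g) {R : ℝ} (hR : 0 < R) :
    radialMean F x ((profileLap m)^[N] g) R = 0 := by
  have hR2 : 0 < R ^ 2 := by positivity
  have hgR := hg.comp_div hR2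
  have h := hF _ (hgR.contDiff_radial x) (hgR.hasCompactSupport_radial x)
  rw [lapl_iterate_radial hgR, profileLap_iterate_comp_div m hg] at h
  have h2 : (∫ y, F y * ((R ^ 2)⁻¹ ^ N * (profileLap m)^[N] g (‖y - x‖ ^ 2 / R ^ 2))) =
      (R ^ 2)⁻¹ ^ N * radialMean F x ((profileLap m)^[N] g) R := by
    rw [radialMean, ← integral_const_mul]
    congr 1; ext y; ring
  rw [h2] at h
  exact (mul_eq_zero.mp h).resolve_left (by positivity)

theorem IsProfile.integrable_mul_radial {F : Evec m → ℝ} (hF : Continuous F) (x : Evec m)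
    {g : ℝ → ℝ} (hg : IsProfile g) {R : ℝ} (hR : 0 < R) :
    Integrable (fun y => F y * g (‖y - x‖ ^ 2 / R ^ 2)) := by
  have hgR := hg.comp_div (show 0 < R ^ 2 by positivity)
  exact (hF.mul (hgR.contDiff_radial x).continuous).integrable_of_hasCompactSupport
    (hgR.hasCompactSupport_radial x).mul_left

theorem IsProfile.exists_bound {g : ℝ → ℝ} (hg : IsProfile g) :
    ∃ B, 0 ≤ B ∧ ∀ s, 0 ≤ s → |g s| ≤ B := by
  obtain ⟨h, S, hS⟩ := hg
  obtain ⟨B, hB⟩ := isCompact_Icc.exists_bound_of_continuousOn (s := Set.Icc 0 S)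
    h.continuous.continuousOn
  refine ⟨|B|, abs_nonneg _, fun s hs => ?_⟩
  rcases le_total S s with h1 | h1
  · rw [hS s h1, abs_zero]; exact abs_nonneg _
  · exact (hB s ⟨hs, h1⟩).trans (le_abs_self _)

theorem hasDerivAt_radialMean {F : Evec m → ℝ} (hF : Continuous F) (x : Evec m)
    {g : ℝ → ℝ} (hg : IsProfile g) {R : ℝ} (hR : 0 < R) :
    HasDerivAt (radialMean F x g) (radialMean F x (fun s => -(2 * s) * deriv g s) R / R) R := by
  have hh : IsProfile (fun s => -(2 * s) * deriv g s) :=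
    hg.deriv.mul_left (p := fun s => -(2 * s)) (by fun_prop)
  obtain ⟨B, hB0, hB⟩ := hh.exists_bound
  obtain ⟨S, hS⟩ := hh.2
  let ρ := 2 * R * (1 + |S|)
  have key := hasDerivAt_integral_of_dominated_loc_of_deriv_le (μ := volume) (𝕜 := ℝ)
    (F := fun R y => F y * g (‖y - x‖ ^ 2 / R ^ 2)) (x₀ := R) (s := Set.Ioo (R / 2) (2 * R))
    (F' := fun R y => F y * ((-(2 * (‖y - x‖ ^ 2 / R ^ 2)) * deriv g (‖y - x‖ ^ 2 / R ^ 2)) / R))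
    (bound := (closedBall x ρ).indicator fun y => |F y| * (B * (2 / R)))
    (Ioo_mem_nhds (by linarith) (by linarith)) ?_ (hg.integrable_mul_radial hF x hR) ?_ ?_ ?_ ?_
  · refine key.2.congr_deriv ?_
    rw [radialMean, ← integral_div]
    congr 1; ext y; ring
  · filter_upwards [lt_mem_nhds hR] with r hr
    exact (hg.integrable_mul_radial hF x hr).aestronglyMeasurable
  · have := (hh.integrable_mul_radial hF x hR).div_const R
    refine (this.congr (ae_of_all _ fun y => ?_)).aestronglyMeasurable
    simp only; ring
  · refine ae_of_all _ fun y r hr => ?_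
    have hr0 : 0 < r := by linarith [hr.1]
    by_cases hy : y ∈ closedBall x ρ
    · rw [Set.indicator_of_mem hy, norm_mul, Real.norm_eq_abs, Real.norm_eq_abs, abs_div,
        abs_of_pos hr0]
      gcongr
      rw [div_eq_mul_inv, div_eq_mul_inv]
      gcongr
      · exact hB _ (by positivity)
      · rw [inv_eq_one_div, div_le_div_iff₀ hr0 hR]
        linarith [hr.1]
    · rw [Set.indicator_of_notMem hy]
      rw [mem_closedBall, dist_eq_norm, not_le] at hy
      have : S ≤ ‖y - x‖ ^ 2 / r ^ 2 := by
        rw [le_div_iff₀ (by positivity)]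
        have h1 : r * (1 + |S|) ≤ ‖y - x‖ := by
          have : r * (1 + |S|) ≤ ρ := by
            simp only [ρ]; gcongr; exact hr.2.le
          linarith
        have h2 : (r * (1 + |S|)) ^ 2 ≤ ‖y - x‖ ^ 2 := by gcongr
        refine le_trans ?_ h2
        rw [mul_pow, mul_comm]
        gcongr
        nlinarith [le_abs_self S, abs_nonneg S]
      have h0 := hS _ this
      simp only at h0
      rw [h0]
      simp
  · refine IntegrableOn.integrable_indicator ?_ measurableSet_closedBall
    exact (Continuous.continuousOn (by fun_prop)).integrableOn_compact (isCompact_closedBall x ρ)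
  · refine ae_of_all _ fun y r hr => ?_
    have hr0 : r ≠ 0 := by linarith [hr.1]
    have h1 : HasDerivAt (fun r : ℝ => ‖y - x‖ ^ 2 / r ^ 2) (-(2 * (‖y - x‖ ^ 2 / r ^ 2)) / r) r := by
      have := (hasDerivAt_const r (‖y - x‖ ^ 2)).div (hasDerivAt_pow 2 r) (by positivity)
      refine this.congr_deriv ?_
      field_simp
      simp
      ring
    refine (((smooth_hasDerivAt hg.1 _).comp r h1).const_mul (F y)).congr_deriv ?_
    ring

end Radial

section MeanValue

variable {m : ℕ}

theorem hasDerivAt_scaled_radialMean {F : Evec m → ℝ} (hF : Continuous F) (x : Evec m)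
    {g G : ℝ → ℝ} (hg : IsProfile g) (hG' : IsProfile G) (hG : ∀ s, HasDerivAt G (-(g s) / 2) s)
    (j : ℕ) {R : ℝ} (hR : 0 < R) :
    HasDerivAt (fun R => (R ^ (m + 2 * j))⁻¹ * radialMean F x ((profileLap m)^[j] g) R)
      (R * ((R ^ (m + 2 * (j + 1)))⁻¹ * radialMean F x ((profileLap m)^[j + 1] G) R)) R := by
  have hgj := hg.profileLap_iterate m j
  have h1 := hasDerivAt_radialMean hF x hgj hR
  have h2 : radialMean F x (fun s => -(2 * s) * deriv ((profileLap m)^[j] g) s) R =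
      radialMean F x ((profileLap m)^[j + 1] G) R +
        (m + 2 * j) * radialMean F x ((profileLap m)^[j] g) R := by
    rw [radialMean, radialMean, radialMean, ← integral_const_mul, ← integral_add
      ((hG'.profileLap_iterate m (j + 1)).integrable_mul_radial hF x hR)
      ((hgj.integrable_mul_radial hF x hR).const_mul _)]
    congr 1
    ext y
    have := congrFun (profileDil_profileLap_iterate m hg hG' hG j) (‖y - x‖ ^ 2 / R ^ 2)
    simp only [profileDil] at this
    linear_combination F y * this
  have h3 := ((hasDerivAt_pow (m + 2 * j) R).inv (by positivity)).mul h1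
  refine h3.congr_deriv ?_
  rw [h2]
  rcases Nat.eq_zero_or_pos (m + 2 * j) with h | h
  · obtain ⟨rfl, rfl⟩ : m = 0 ∧ j = 0 := by omega
    simp
    field_simp
  · obtain ⟨n, hn⟩ := Nat.exists_eq_succ_of_ne_zero h.ne'
    have hn' : (m + 2 * j : ℝ) = n + 1 := by exact_mod_cast hn
    rw [show m + 2 * (j + 1) = n + 3 by omega, hn, hn']
    simp only [Nat.succ_eq_add_one, Nat.add_sub_cancel, Pi.inv_apply]
    push_cast
    field_simp
    ring

theorem exists_scaled_radialMean_eq_sum {N : ℕ} {F : Evec m → ℝ} (hF : Continuous F)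
    (hN : WeakPolyharmonic N F) (x : Evec m) (n : ℕ) :
    ∀ (j : ℕ), j + n = N → ∀ {g : ℝ → ℝ}, IsProfile g → ∃ c : ℕ → ℝ, ∀ R : ℝ, 0 < R →
      (R ^ (m + 2 * j))⁻¹ * radialMean F x ((profileLap m)^[j] g) R =
        ∑ i ∈ Finset.range n, c i * R ^ (2 * i) := by
  induction n with
  | zero =>
    rintro j hj g hg
    obtain rfl : j = N := by omega
    exact ⟨0, fun R hR => by simp [radialMean_profileLap_iterate_eq_zero hN x hg hR]⟩
  | succ n ih =>
    intro j hj g hg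
    obtain ⟨G, hG', hG⟩ := hg.exists_antideriv
    obtain ⟨c, hc⟩ := ih (j + 1) (by omega) hG'
    set r : ℝ → ℝ := fun R => (R ^ (m + 2 * j))⁻¹ * radialMean F x ((profileLap m)^[j] g) R
    let p : ℝ → ℝ := fun R => ∑ i ∈ Finset.range n, c i / (2 * (i + 1)) * R ^ (2 * (i + 1))
    have hp : ∀ R, HasDerivAt p (R * ∑ i ∈ Finset.range n, c i * R ^ (2 * i)) R := by
      intro R
      have : HasDerivAt p (∑ i ∈ Finset.range n, c i / (2 * (i + 1)) *
          (((2 * (i + 1) : ℕ) : ℝ) * R ^ (2 * (i + 1) - 1))) R :=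
        HasDerivAt.fun_sum fun i _ => (hasDerivAt_pow (2 * (i + 1)) R).const_mul _
      refine this.congr_deriv ?_
      rw [Finset.mul_sum]
      refine Finset.sum_congr rfl fun i _ => ?_
      rw [show 2 * (i + 1) - 1 = 2 * i + 1 by omega, pow_succ]
      push_cast
      field_simp
    have hr : ∀ R ∈ Set.Ioi (0 : ℝ), HasDerivAt (fun R => r R - p R) 0 R := by
      intro R hR
      have h := (hasDerivAt_scaled_radialMean hF x hg hG' hG j hR).sub (hp R)
      refine h.congr_deriv ?_
      rw [hc R hR, sub_self]
    have hconst : ∀ R ∈ Set.Ioi (0 : ℝ), r R - p R = r 1 - p 1 := by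
      intro R hR
      refine isOpen_Ioi.is_const_of_deriv_eq_zero isPreconnected_Ioi
        (fun y hy => (hr y hy).differentiableAt.differentiableWithinAt)
        (fun y hy => (hr y hy).deriv) hR (Set.mem_Ioi.mpr one_pos)
    refine ⟨fun i => if i = 0 then r 1 - p 1 else c (i - 1) / (2 * i), fun R hR => ?_⟩
    rw [Finset.sum_range_succ']
    have := hconst R hR
    simp only [Nat.add_eq_zero_iff, one_ne_zero, and_false, if_false, Nat.add_sub_cancel,
      if_true, mul_zero, pow_zero, mul_one]
    push_cast
    change r R = p R + (r 1 - p 1)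
    linarith

theorem exists_extrapolation_weights (M : ℕ) :
    ∃ w : ℕ → ℝ, ∀ p < M, ∑ i ∈ Finset.range M, w i * ((i : ℝ) + 1) ^ p = 0 ^ p := by
  classical
  let v : ℕ → ℝ := fun i => i + 1
  have hv : Set.InjOn v (Finset.range M) := fun a _ b _ h => by simpa [v] using h
  refine ⟨fun i => Polynomial.eval 0 (Lagrange.basis (Finset.range M) v i), fun p hp => ?_⟩
  have h := Lagrange.eq_interpolate (s := Finset.range M) (f := (Polynomial.X : Polynomial ℝ) ^ p) hv
    (by simpa using hp)
  have h2 := congrArg (Polynomial.eval 0) h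
  rw [Lagrange.interpolate_apply, Polynomial.eval_finsetSum] at h2
  simp only [Polynomial.eval_pow, Polynomial.eval_X, Polynomial.eval_mul, Polynomial.eval_C] at h2
  rw [h2]
  exact Finset.sum_congr rfl fun i _ => mul_comm _ _

theorem radialMean_eq_integral_translate (F : Evec m → ℝ) (x : Evec m) (g : ℝ → ℝ) {R : ℝ}
    (hR : 0 < R) : (R ^ m)⁻¹ * radialMean F x g R = ∫ z : Evec m, F (x + R • z) * g (‖z‖ ^ 2) := by
  have h := Measure.integral_comp_smul (volume : Measure (Evec m))
    (fun y => F (x + y) * g (‖y‖ ^ 2 / R ^ 2)) R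
  have h2 : radialMean F x g R = ∫ y : Evec m, F (x + y) * g (‖y‖ ^ 2 / R ^ 2) := by
    rw [radialMean, ← integral_add_left_eq_self _ x]
    simp
  rw [finrank_euclideanSpace_fin, abs_of_pos (by positivity), smul_eq_mul, ← h2] at h
  rw [← h]
  congr 1
  ext z
  rw [norm_smul, mul_pow, Real.norm_eq_abs, sq_abs, mul_div_cancel_left₀ _ (by positivity)]

theorem tendsto_scaled_radialMean {F : Evec m → ℝ} (hF : Continuous F) (x : Evec m)
    {g : ℝ → ℝ} (hg : IsProfile g) :
    Tendsto (fun R => (R ^ m)⁻¹ * radialMean F x g R) (𝓝[>] 0)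
      (𝓝 (F x * ∫ z : Evec m, g (‖z‖ ^ 2))) := by
  have hc := hg.1.continuous
  obtain ⟨K, hK, hK0⟩ := exists_compact_iff_hasCompactSupport.mpr
    (hg.hasCompactSupport_radial (m := m) 0)
  have hset : ∀ R : ℝ, ∫ z in K, F (x + R • z) * g (‖z‖ ^ 2) =
      ∫ z : Evec m, F (x + R • z) * g (‖z‖ ^ 2) := fun R =>
    setIntegral_eq_integral_of_forall_compl_eq_zero fun z hz => by
      have := hK0 z hz
      rw [sub_zero] at this
      rw [this, mul_zero]
  have hcont : Continuous fun R : ℝ => ∫ z in K, F (x + R • z) * g (‖z‖ ^ 2) :=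
    continuous_parametric_integral_of_continuous (by fun_prop) hK
  rw [funext hset] at hcont
  have h := (hcont.tendsto 0).mono_left (nhdsWithin_le_nhds (s := Set.Ioi 0))
  simp only [zero_smul, add_zero, integral_const_mul] at h
  refine h.congr' ?_
  filter_upwards [self_mem_nhdsWithin] with R hR
  exact (radialMean_eq_integral_translate F x g hR).symm

theorem exists_normalized_profile (m : ℕ) :
    ∃ g, IsProfile g ∧ ∫ z : Evec m, g (‖z‖ ^ 2) = 1 := by
  let g₀ : ℝ → ℝ := fun s => Real.smoothTransition (1 - s)
  have hg₀ : IsProfile g₀ :=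
    ⟨Real.smoothTransition.contDiff.comp (by fun_prop), 1, fun s hs =>
      Real.smoothTransition.zero_of_nonpos (by linarith)⟩
  have hpos : 0 < ∫ z : Evec m, g₀ (‖z‖ ^ 2) := by
    have hs := hg₀.hasCompactSupport_radial (m := m) 0
    simp only [sub_zero] at hs
    refine Continuous.integral_pos_of_hasCompactSupport_nonneg_nonzero (x := 0)
      (by have := hg₀.1.continuous; fun_prop) hs
      (fun z => Real.smoothTransition.nonneg _) ?_
    simp [g₀]
  refine ⟨fun s => (∫ z : Evec m, g₀ (‖z‖ ^ 2))⁻¹ * g₀ s, hg₀.mul_left contDiff_const, ?_⟩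
  rw [integral_const_mul, inv_mul_cancel₀ hpos.ne']

/-- Mean value property for polyharmonic functions. -/
theorem exists_mean_value_profile (m N : ℕ) :
    ∃ K, IsProfile K ∧ ∀ F : Evec m → ℝ, Continuous F → WeakPolyharmonic N F →
      ∀ (x : Evec m) (R : ℝ), 0 < R → F x = (R ^ m)⁻¹ * radialMean F x K R := by
  obtain ⟨g, hg, hg1⟩ := exists_normalized_profile m
  obtain ⟨w, hw⟩ := exists_extrapolation_weights (2 * N)
  have hKi : ∀ i : ℕ, IsProfile fun s => (w i * (((i : ℝ) + 1) ^ m)⁻¹) * g (s / ((i : ℝ) + 1) ^ 2) :=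
    fun i => (hg.comp_div (by positivity)).mul_left contDiff_const
  refine ⟨_, IsProfile.sum (Finset.range (2 * N)) fun i _ => hKi i, fun F hF hN x R hR => ?_⟩
  obtain ⟨c, hc⟩ := exists_scaled_radialMean_eq_sum hF hN x N 0 (by omega) hg
  simp only [mul_zero, add_zero, Function.iterate_zero, id] at hc
  have h0 : F x = ∑ i ∈ Finset.range N, c i * 0 ^ (2 * i) := by
    have h1 := tendsto_scaled_radialMean hF x hg
    rw [hg1, mul_one] at h1
    refine tendsto_nhds_unique h1 ?_
    have h2 : Continuous fun R : ℝ => ∑ i ∈ Finset.range N, c i * R ^ (2 * i) := by fun_prop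
    refine ((h2.tendsto 0).mono_left nhdsWithin_le_nhds).congr' ?_
    filter_upwards [self_mem_nhdsWithin] with R hR
    exact (hc R hR).symm
  have h1 : radialMean F x (fun s => ∑ i ∈ Finset.range (2 * N),
      (w i * (((i : ℝ) + 1) ^ m)⁻¹) * g (s / ((i : ℝ) + 1) ^ 2)) R =
      ∑ i ∈ Finset.range (2 * N), (w i * (((i : ℝ) + 1) ^ m)⁻¹) *
        radialMean F x g ((i + 1) * R) := by
    rw [radialMean]
    simp only [Finset.mul_sum]
    rw [integral_finsetSum _ fun i _ => (hKi i).integrable_mul_radial hF x hR]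
    refine Finset.sum_congr rfl fun i _ => ?_
    rw [radialMean, ← integral_const_mul]
    congr 1
    ext y
    rw [div_div, mul_pow, mul_comm (R ^ 2)]
    ring
  have h2 : ∀ i : ℕ, (R ^ m)⁻¹ * ((w i * (((i : ℝ) + 1) ^ m)⁻¹) * radialMean F x g ((i + 1) * R)) =
      ∑ j ∈ Finset.range N, (c j * R ^ (2 * j)) * (w i * ((i : ℝ) + 1) ^ (2 * j)) := by
    intro i
    have h3 := hc ((i + 1) * R) (by positivity)
    have h4 : (R ^ m)⁻¹ * ((w i * (((i : ℝ) + 1) ^ m)⁻¹) * radialMean F x g ((i + 1) * R)) =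
        w i * ((((i + 1) * R) ^ m)⁻¹ * radialMean F x g ((i + 1) * R)) := by
      rw [mul_pow, mul_inv]; ring
    rw [h4, h3, Finset.mul_sum]
    refine Finset.sum_congr rfl fun j _ => ?_
    rw [mul_pow]; ring
  rw [h1, Finset.mul_sum, Finset.sum_congr rfl fun i _ => h2 i, Finset.sum_comm, h0]
  refine Finset.sum_congr rfl fun j hj => ?_
  rw [← Finset.mul_sum, hw _ (by have := Finset.mem_range.mp hj; omega)]
  rcases Nat.eq_zero_or_pos j with rfl | hj
  · simp
  · simp [hj.ne']

end MeanValue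

section Liouville

variable {m : ℕ}

theorem contDiff_pdv {φ : Evec m → ℝ} (hφ : ContDiff ℝ ∞ φ) (i : Fin m) :
    ContDiff ℝ ∞ (pdv i φ) :=
  (hφ.fderiv_right (m := ∞) (by simp)).clm_apply contDiff_const

theorem hasCompactSupport_pdv {φ : Evec m → ℝ} (hφ : HasCompactSupport φ) (i : Fin m) :
    HasCompactSupport (pdv i φ) :=
  hφ.fderiv_apply ℝ _

theorem pdv_comm {φ : Evec m → ℝ} (hφ : ContDiff ℝ ∞ φ) (i j : Fin m) :
    pdv i (pdv j φ) = pdv j (pdv i φ) := by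
  ext x
  have hd : DifferentiableAt ℝ (fderiv ℝ φ) x :=
    (hφ.fderiv_right (m := 1) (by norm_cast)).differentiable (by simp) x
  have h : ∀ a b : Fin m, pdv a (pdv b φ) x =
      fderiv ℝ (fderiv ℝ φ) x (EuclideanSpace.single a 1) (EuclideanSpace.single b 1) := by
    intro a b
    have := hd.hasFDerivAt.clm_apply (hasFDerivAt_const (EuclideanSpace.single b (1 : ℝ)) x)
    refine (pdv_eq_of_hasFDerivAt this a).trans ?_
    simp
  rw [h, h]
  exact (hφ.contDiffAt.isSymmSndFDerivAt (by simp; norm_cast)) _ _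

/-- Iterated partial derivatives along a list of coordinate directions. -/
def pdvs (L : List (Fin m)) (φ : Evec m → ℝ) : Evec m → ℝ := L.foldr pdv φ

theorem pdvs_cons (i : Fin m) (L : List (Fin m)) (φ : Evec m → ℝ) :
    pdvs (i :: L) φ = pdv i (pdvs L φ) := rfl

theorem contDiff_pdvs {φ : Evec m → ℝ} (hφ : ContDiff ℝ ∞ φ) (L : List (Fin m)) :
    ContDiff ℝ ∞ (pdvs L φ) := by
  induction L with
  | nil => exact hφ
  | cons i L ih => exact contDiff_pdv ih i

theorem hasCompactSupport_pdvs {φ : Evec m → ℝ} (hφ : HasCompactSupport φ) (L : List (Fin m)) :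
    HasCompactSupport (pdvs L φ) := by
  induction L with
  | nil => exact hφ
  | cons i L ih => exact hasCompactSupport_pdv ih i

theorem pdvs_comp_smul {φ : Evec m → ℝ} (hφ : ContDiff ℝ ∞ φ) (a c : ℝ) (L : List (Fin m)) :
    pdvs L (fun z => a * φ (c • z)) = fun z => (a * c ^ L.length) * pdvs L φ (c • z) := by
  induction L with
  | nil => simp [pdvs]
  | cons i L ih =>
    rw [pdvs_cons, ih]
    ext z
    have h1 := ((contDiff_pdvs hφ L).differentiable (by simp) (c • z)).hasFDerivAt
    have h2 := (h1.comp z ((hasFDerivAt_id (𝕜 := ℝ) z).const_smul c)).const_mul (a * c ^ L.length)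
    refine (pdv_eq_of_hasFDerivAt h2 i).trans ?_
    simp [pdvs_cons, pdv, pow_succ]
    ring

theorem pdvs_integral_mul {F : Evec m → ℝ} (hF : Continuous F) {φ : Evec m → ℝ}
    (hφ : ContDiff ℝ ∞ φ) (hφ' : HasCompactSupport φ) (L : List (Fin m)) :
    pdvs L (fun x => ∫ y, F y * φ (x - y)) = fun x => ∫ y, F y * pdvs L φ (x - y) := by
  induction L with
  | nil => rfl
  | cons i L ih =>
    rw [pdvs_cons, ih]
    ext x
    have hs := contDiff_pdvs hφ L
    have hc := hasCompactSupport_pdvs hφ' L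
    have h := hc.hasFDerivAt_convolution_right (ContinuousLinearMap.mul ℝ ℝ) (μ := volume)
      hF.locallyIntegrable (hs.of_le (by norm_cast)) x
    refine (pdv_eq_of_hasFDerivAt h i).trans ?_
    rw [convolution_precompR_apply _ hF.locallyIntegrable (hc.fderiv ℝ)
      (hs.continuous_fderiv (by simp))]
    rfl

theorem pdvs_eq_zero_of_growth {N l : ℕ} {F : Evec m → ℝ} (hF : Continuous F)
    (hN : WeakPolyharmonic N F)
    (hgrow : (fun R : ℝ => ∫ x in ball (0 : Evec m) R, |F x|) =o[atTop] fun R : ℝ => R ^ (l + m))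
    (L : List (Fin m)) (hL : L.length = l) (x : Evec m) : pdvs L F x = 0 := by
  obtain ⟨K, hK, hKF⟩ := exists_mean_value_profile m N
  let κ : Evec m → ℝ := fun z => K (‖z‖ ^ 2)
  have hκ : ContDiff ℝ ∞ κ := by simpa using hK.contDiff_radial (m := m) 0
  have hκ' : HasCompactSupport κ := by simpa using hK.hasCompactSupport_radial (m := m) 0
  have hψ := (contDiff_pdvs hκ L).continuous
  have hψ' := hasCompactSupport_pdvs hκ' L
  obtain ⟨B, hB⟩ := hψ.bounded_above_of_compact_support hψ'
  have hB0 : 0 ≤ B := (norm_nonneg _).trans (hB 0)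
  obtain ⟨S, hS0, hS⟩ : ∃ S : ℝ, 0 < S ∧ ∀ z, S ≤ ‖z‖ → pdvs L κ z = 0 :=
    hψ'.exists_pos_le_norm
  have hrep : ∀ R : ℝ, 0 < R → pdvs L F x =
      ∫ y, F y * (((R ^ m)⁻¹ * R⁻¹ ^ l) * pdvs L κ (R⁻¹ • (x - y))) := by
    intro R hR
    have hFR : F = fun x => ∫ y, F y * ((R ^ m)⁻¹ * κ (R⁻¹ • (x - y))) := by
      ext x
      rw [hKF F hF hN x R hR, radialMean, ← integral_const_mul]
      congr 1
      ext y
      simp only [κ]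
      rw [norm_smul, mul_pow, Real.norm_eq_abs, sq_abs, norm_sub_rev x y, div_eq_inv_mul, inv_pow]
      ring
    have hcR : HasCompactSupport fun z => (R ^ m)⁻¹ * κ (R⁻¹ • z) :=
      HasCompactSupport.mul_left (hκ'.comp_smul (inv_ne_zero hR.ne'))
    have hsR : ContDiff ℝ ∞ fun z => (R ^ m)⁻¹ * κ (R⁻¹ • z) :=
      contDiff_const.mul (hκ.comp (contDiff_const_smul _))
    have h := congrFun (pdvs_integral_mul hF hsR hcR L) x
    rw [← hFR] at h
    rw [h, pdvs_comp_smul hκ, hL]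
  have hbound : ∀ R : ℝ, ‖x‖ + 1 ≤ R → |pdvs L F x| ≤
      (B * (S + 1) ^ (l + m)) * ((∫ y in ball (0 : Evec m) ((S + 1) * R), |F y|) /
        ((S + 1) * R) ^ (l + m)) := by
    intro R hR
    have hR0 : 0 < R := by linarith [norm_nonneg x]
    have hfi : IntegrableOn (fun y => |F y|) (ball (0 : Evec m) ((S + 1) * R)) :=
      (hF.abs.continuousOn.integrableOn_compact
        (isCompact_closedBall (0 : Evec m) ((S + 1) * R))).mono_set ball_subset_closedBall
    rw [hrep R hR0, ← Real.norm_eq_abs]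
    refine (norm_integral_le_of_norm_le (g := (ball (0 : Evec m) ((S + 1) * R)).indicator
      fun y => (((R ^ m)⁻¹ * R⁻¹ ^ l) * B) * |F y|) ?_ (ae_of_all _ fun y => ?_)).trans ?_
    · exact IntegrableOn.integrable_indicator (hfi.const_mul _) measurableSet_ball
    · by_cases hy : y ∈ ball (0 : Evec m) ((S + 1) * R)
      · rw [Set.indicator_of_mem hy, norm_mul, norm_mul, Real.norm_eq_abs (F y), mul_comm,
          Real.norm_of_nonneg (by positivity)]
        gcongr
        exact hB _
      · rw [Set.indicator_of_notMem hy]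
        rw [mem_ball_zero_iff, not_lt] at hy
        rw [hS]
        · simp
        rw [norm_smul, norm_inv, Real.norm_of_nonneg hR0.le, ← div_eq_inv_mul, le_div_iff₀ hR0]
        have := norm_sub_norm_le y x
        rw [norm_sub_rev] at this
        linarith
    · rw [integral_indicator measurableSet_ball, integral_const_mul]
      refine le_of_eq ?_
      have : 0 < S + 1 := by linarith
      rw [mul_pow, pow_add R, inv_pow]
      field_simp
  have hlim : Tendsto (fun R : ℝ => (B * (S + 1) ^ (l + m)) *
      ((∫ y in ball (0 : Evec m) ((S + 1) * R), |F y|) / ((S + 1) * R) ^ (l + m))) atTop (𝓝 0) := by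
    have h1 := hgrow.tendsto_div_nhds_zero.comp
      (tendsto_id.const_mul_atTop (show 0 < S + 1 by linarith))
    simpa using h1.const_mul (B * (S + 1) ^ (l + m))
  have h := ge_of_tendsto hlim ((eventually_ge_atTop (‖x‖ + 1)).mono hbound)
  exact abs_nonpos_iff.mp h

end Liouville

section Weak

variable {m : ℕ}

theorem differentiable_eval (P : MvPolynomial (Fin m) ℝ) :
    Differentiable ℝ fun u : Evec m => eval (fun i => u i) P := by
  induction P using MvPolynomial.induction_on with
  | C a => simp
  | add p q hp hq =>
    simp only [map_add]
    exact hp.add hq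
  | mul_X p i hp =>
    simp only [map_mul, eval_X]
    exact hp.mul fun u => (hasFDerivAt_coord i u).differentiableAt

theorem pdv_eval (j : Fin m) (P : MvPolynomial (Fin m) ℝ) (u : Evec m) :
    pdv j (fun u : Evec m => eval (fun i => u i) P) u = eval (fun i => u i) (pderiv j P) := by
  induction P using MvPolynomial.induction_on with
  | C a => simp [pdv]
  | add p q hp hq =>
    have := (differentiable_eval p u).hasFDerivAt.add (differentiable_eval q u).hasFDerivAt
    simp only [map_add]
    refine (pdv_eq_of_hasFDerivAt this j).trans ?_
    rw [← hp, ← hq]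
    rfl
  | mul_X p i hp =>
    have := (differentiable_eval p u).hasFDerivAt.mul (hasFDerivAt_coord i u)
    simp only [map_mul, eval_X]
    refine (pdv_eq_of_hasFDerivAt this j).trans ?_
    have hp' : fderiv ℝ (fun u : Evec m => eval (fun i => u i) p) u (EuclideanSpace.single j 1) =
      eval (fun i => u i) (pderiv j p) := hp
    by_cases hij : i = j
    · subst hij
      simp [hp']
    · simp [hp', hij]

variable {ι : Type} [Fintype ι]

/-- `g x v = ∑ s, a s x * p s v` on `ℝ^m × 𝔹^m`. -/
def IsPolyExpansion (a : ι → Evec m → ℝ) (p : ι → MvPolynomial (Fin m) ℝ)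
    (g : Evec m → Evec m → ℝ) : Prop :=
  ∀ x, ∀ v ∈ ball (0 : Evec m) 1, g x v = ∑ s, a s x * eval (fun i => v i) (p s)

theorem IsPolyExpansion.pd1 {a : ι → Evec m → ℝ} {p : ι → MvPolynomial (Fin m) ℝ}
    {g : Evec m → Evec m → ℝ} (h : IsPolyExpansion a p g) (ha : ∀ s, Differentiable ℝ (a s))
    (j : Fin m) : IsPolyExpansion (fun s => pdv j (a s)) p (pd1 j g) := by
  intro x v hv
  have h1 : (fun x => g x v) = fun x => ∑ s, a s x * eval (fun i => v i) (p s) :=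
    funext fun x => h x v hv
  have h2 : HasFDerivAt (fun x => ∑ s, a s x * eval (fun i => v i) (p s))
      (∑ s, (eval (fun i => v i) (p s)) • fderiv ℝ (a s) x) x :=
    HasFDerivAt.fun_sum fun s _ => (ha s x).hasFDerivAt.mul_const _
  rw [_root_.pd1, h1, h2.fderiv]
  simp [pdv, mul_comm]

theorem IsPolyExpansion.pd2 {a : ι → Evec m → ℝ} {p : ι → MvPolynomial (Fin m) ℝ}
    {g : Evec m → Evec m → ℝ} (h : IsPolyExpansion a p g)
    (j : Fin m) : IsPolyExpansion a (fun s => pderiv j (p s)) (pd2 j g) := by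
  intro x v hv
  have h1 : (fun v => g x v) =ᶠ[𝓝 v] fun v => ∑ s, a s x * eval (fun i => v i) (p s) := by
    filter_upwards [isOpen_ball.mem_nhds hv] with w hw using h x w hw
  have h2 : HasFDerivAt (fun v : Evec m => ∑ s, a s x * eval (fun i => v i) (p s))
      (∑ s, a s x • fderiv ℝ (fun v : Evec m => eval (fun i => v i) (p s)) v) v :=
    HasFDerivAt.fun_sum fun s _ => (differentiable_eval (p s) v).hasFDerivAt.const_mul _
  rw [_root_.pd2, h1.fderiv_eq, h2.fderiv]
  simp [← pdv_eval, pdv]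

theorem contDiff_pdv_of_succ {n : ℕ} {a : Evec m → ℝ} (ha : ContDiff ℝ (n + 1) a) (i : Fin m) :
    ContDiff ℝ n (pdv i a) :=
  (ha.fderiv_right le_rfl).clm_apply contDiff_const

theorem integrable_mul_test {a φ : Evec m → ℝ} (ha : Continuous a) (hφ : Continuous φ)
    (hφ' : HasCompactSupport φ) : Integrable fun x => a x * φ x :=
  (ha.mul hφ).integrable_of_hasCompactSupport hφ'.mul_left

theorem integral_mul_pdv {a φ : Evec m → ℝ} (ha : ContDiff ℝ 1 a) (hφ : ContDiff ℝ ∞ φ)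
    (hφ' : HasCompactSupport φ) (i : Fin m) :
    ∫ x, a x * pdv i φ x = -∫ x, pdv i a x * φ x := by
  refine integral_mul_fderiv_eq_neg_fderiv_mul_of_integrable ?_ ?_ ?_ ?_ ?_
  · exact integrable_mul_test (contDiff_pdv_of_succ (n := 0) (by simpa using ha) i).continuous
      hφ.continuous hφ'
  · exact integrable_mul_test ha.continuous (contDiff_pdv hφ i).continuous
      (hasCompactSupport_pdv hφ' i)
  · exact integrable_mul_test ha.continuous hφ.continuous hφ'
  · exact fun x _ => ha.differentiable (by simp) x
  · exact fun x _ => hφ.differentiable (by simp) x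

theorem integral_mul_pdv_pdv {a φ : Evec m → ℝ} (ha : ContDiff ℝ 2 a) (hφ : ContDiff ℝ ∞ φ)
    (hφ' : HasCompactSupport φ) (i j : Fin m) :
    ∫ x, a x * pdv j (pdv i φ) x = ∫ x, pdv i (pdv j a) x * φ x := by
  rw [integral_mul_pdv (ha.of_le (by norm_num)) (contDiff_pdv hφ i) (hasCompactSupport_pdv hφ' i),
    integral_mul_pdv (contDiff_pdv_of_succ (n := 1) (by norm_num; exact ha) j) hφ hφ', neg_neg]

theorem lapl_sum {κ : Type} (t : Finset κ) {ψ : κ → Evec m → ℝ} (hψ : ∀ j, ContDiff ℝ ∞ (ψ j)) :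
    lapl (fun x => ∑ j ∈ t, ψ j x) = fun x => ∑ j ∈ t, lapl (ψ j) x := by
  have h : ∀ (i : Fin m) {χ : κ → Evec m → ℝ}, (∀ j, ContDiff ℝ ∞ (χ j)) →
      pdv i (fun x => ∑ j ∈ t, χ j x) = fun x => ∑ j ∈ t, pdv i (χ j) x := by
    intro i χ hχ
    ext x
    have h2 : HasFDerivAt (fun x => ∑ j ∈ t, χ j x) (∑ j ∈ t, fderiv ℝ (χ j) x) x :=
      HasFDerivAt.fun_sum fun j _ => ((hχ j).differentiable (by simp) x).hasFDerivAt
    rw [pdv_eq_of_hasFDerivAt h2]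
    simp [pdv]
  ext x
  simp only [lapl]
  rw [Finset.sum_comm]
  refine Finset.sum_congr rfl fun i _ => ?_
  rw [h i hψ, h i fun j => contDiff_pdv (hψ j) i]

theorem contDiff_lapl {φ : Evec m → ℝ} (hφ : ContDiff ℝ ∞ φ) : ContDiff ℝ ∞ (lapl φ) :=
  ContDiff.sum fun i _ => contDiff_pdv (contDiff_pdv hφ i) i

theorem hasCompactSupport_lapl {φ : Evec m → ℝ} (hφ : HasCompactSupport φ) :
    HasCompactSupport (lapl φ) := by
  refine HasCompactSupport.intro hφ.isCompact fun x hx => Finset.sum_eq_zero fun i _ => ?_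
  have h : tsupport (pdv i (pdv i φ)) ⊆ tsupport φ :=
    (tsupport_fderiv_apply_subset ℝ _).trans (tsupport_fderiv_apply_subset ℝ _)
  exact image_eq_zero_of_notMem_tsupport fun h' => hx (h h')

theorem contDiff_lapl_iterate {φ : Evec m → ℝ} (hφ : ContDiff ℝ ∞ φ) (n : ℕ) :
    ContDiff ℝ ∞ (lapl^[n] φ) := by
  induction n with
  | zero => exact hφ
  | succ n ih => rw [Function.iterate_succ_apply']; exact contDiff_lapl ih

theorem hasCompactSupport_lapl_iterate {φ : Evec m → ℝ} (hφ : HasCompactSupport φ) (n : ℕ) :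
    HasCompactSupport (lapl^[n] φ) := by
  induction n with
  | zero => exact hφ
  | succ n ih => rw [Function.iterate_succ_apply']; exact hasCompactSupport_lapl ih

theorem lapl_iterate_sum {κ : Type} (t : Finset κ) {ψ : κ → Evec m → ℝ}
    (hψ : ∀ j, ContDiff ℝ ∞ (ψ j)) (n : ℕ) :
    lapl^[n] (fun x => ∑ j ∈ t, ψ j x) = fun x => ∑ j ∈ t, lapl^[n] (ψ j) x := by
  induction n with
  | zero => rfl
  | succ n ih =>
    rw [Function.iterate_succ_apply', ih, lapl_sum t fun j => contDiff_lapl_iterate (hψ j) n]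
    simp only [Function.iterate_succ_apply']

/-- Smooth functions with compact support. -/
def TestFn (m : ℕ) : Type := {φ : Evec m → ℝ // ContDiff ℝ ∞ φ ∧ HasCompactSupport φ}

/-- Partial derivatives of test functions. -/
def TestFn.pdv (i : Fin m) (φ : TestFn m) : TestFn m :=
  ⟨_root_.pdv i φ.1, contDiff_pdv φ.2.1 i, hasCompactSupport_pdv φ.2.2 i⟩

/-- The polynomial-valued distribution `φ ↦ ∑ s, (∫ a s φ) p s`. -/
def polyDistrib (a : ι → Evec m → ℝ) (p : ι → MvPolynomial (Fin m) ℝ) (φ : Evec m → ℝ) :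
    MvPolynomial (Fin m) ℝ :=
  ∑ s, C (∫ x, a s x * φ x) * p s

theorem eval_polyDistrib (a : ι → Evec m → ℝ) (p : ι → MvPolynomial (Fin m) ℝ) (φ : Evec m → ℝ)
    (v : Fin m → ℝ) : eval v (polyDistrib a p φ) = ∑ s, (∫ x, a s x * φ x) * eval v (p s) := by
  simp [polyDistrib]

theorem pderiv_polyDistrib (a : ι → Evec m → ℝ) (p : ι → MvPolynomial (Fin m) ℝ) (φ : Evec m → ℝ)
    (j : Fin m) : pderiv j (polyDistrib a p φ) = polyDistrib a (fun s => pderiv j (p s)) φ := by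
  simp [polyDistrib]

theorem opL_iterate_polyDistrib {a : ι → Evec m → ℝ} (ha : ∀ s, Continuous (a s))
    (p : ι → MvPolynomial (Fin m) ℝ) (n : ℕ) (φ : TestFn m) :
    (opL (TestFn.pdv (m := m)))^[n] (fun φ => polyDistrib a p φ.1) φ =
      polyDistrib a p (lapl^[n] φ.1) := by
  induction n generalizing φ with
  | zero => rfl
  | succ n ih =>
    rw [Function.iterate_succ_apply', opL_apply]
    simp only [ih]
    have h1 : lapl^[n + 1] φ.1 =
        fun x => ∑ i, lapl^[n] (pdv i (pdv i φ.1)) x := by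
      rw [Function.iterate_succ_apply, ← lapl_iterate_sum _ fun i =>
        contDiff_pdv (contDiff_pdv φ.2.1 i) i]
      rfl
    rw [h1]
    simp only [polyDistrib]
    rw [Finset.sum_comm]
    refine Finset.sum_congr rfl fun s _ => ?_
    rw [← Finset.sum_mul, ← map_sum]
    congr 2
    simp only [Finset.mul_sum]
    rw [integral_finsetSum]
    · rfl
    · intro i _
      exact integrable_mul_test (ha s)
        (contDiff_lapl_iterate (contDiff_pdv (contDiff_pdv φ.2.1 i) i) n).continuous
        (hasCompactSupport_lapl_iterate (hasCompactSupport_pdv (hasCompactSupport_pdv φ.2.2 i) i) n)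

end Weak

section Bosonic

variable {m : ℕ} {ι : Type} [Fintype ι]

theorem totalDegree_polyDistrib_le {k : ℕ} (a : ι → Evec m → ℝ) {p : ι → MvPolynomial (Fin m) ℝ}
    (hp : ∀ s, (p s).totalDegree ≤ k) (φ : Evec m → ℝ) : (polyDistrib a p φ).totalDegree ≤ k := by
  refine totalDegree_finsetSum_le fun s _ => ?_
  refine (totalDegree_mul _ _).trans ?_
  simpa using hp s

theorem sum_mul_integral_eq_zero {κ : Type} [Fintype κ] {b : κ → Evec m → ℝ} {W : κ → ℝ}
    (hb : ∀ q, Continuous (b q)) (h : ∀ x, ∑ q, W q * b q x = 0) (φ : TestFn m) :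
    ∑ q, W q * ∫ x, b q x * φ.1 x = 0 := by
  simp only [← integral_const_mul]
  rw [← integral_finsetSum _ fun q _ =>
    (integrable_mul_test (hb q) φ.2.1.continuous φ.2.2).const_mul _]
  refine integral_eq_zero_of_ae (ae_of_all _ fun x => ?_)
  simp only [← mul_assoc, ← Finset.sum_mul, h, zero_mul, Pi.zero_apply]

theorem polyDistrib_bosonic {k : ℕ} (hm : 4 < m) {a : ι → Evec m → ℝ}
    (ha : ∀ s, ContDiff ℝ 2 (a s)) {p : ι → MvPolynomial (Fin m) ℝ} {f : Evec m → Evec m → ℝ}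
    (hf : IsPolyExpansion a p f)
    (hD : ∀ x : Evec m, ∀ ν ∈ ball (0 : Evec m) 1, Dk m k f x ν = 0) (φ : TestFn m) :
    (((m : ℝ) + 2 * k - 2) * ((m : ℝ) + 2 * k - 4)) •
        ∑ i, polyDistrib a p (pdv i (pdv i φ.1))
      - (4 * ((m : ℝ) + 2 * k - 4)) •
        ∑ i, ∑ j, X i * pderiv j (polyDistrib a p (pdv j (pdv i φ.1)))
      + (4 : ℝ) • ((∑ i, X i ^ 2) *
        ∑ i, ∑ j, pderiv i (pderiv j (polyDistrib a p (pdv j (pdv i φ.1))))) = 0 := by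
  have hm' : (4 : ℝ) < m := by exact_mod_cast hm
  have hk' : (0 : ℝ) ≤ k := Nat.cast_nonneg k
  set α : ℝ := (m : ℝ) + 2 * k - 2 with hα
  set β : ℝ := (m : ℝ) + 2 * k - 4 with hβ
  have hα0 : α ≠ 0 := by simp only [hα]; linarith
  have hβ0 : β ≠ 0 := by simp only [hβ]; linarith
  have ha1 : ∀ s i, ContDiff ℝ 1 (pdv i (a s)) := fun s i =>
    contDiff_pdv_of_succ (n := 1) (by norm_num; exact ha s) i
  have ha2 : ∀ s i j, Continuous (pdv i (pdv j (a s))) := fun s i j =>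
    (contDiff_pdv_of_succ (n := 0) (by simpa using ha1 s j) i).continuous
  have hd : ∀ s, Differentiable ℝ (a s) := fun s => (ha s).differentiable (by simp)
  have hd1 : ∀ j s, Differentiable ℝ (pdv j (a s)) := fun j s =>
    (ha1 s j).differentiable (by simp)
  refine eq_zero_of_eval_ball fun v hv => ?_
  let W : Fin m × Fin m × ι → ℝ := fun q =>
    (if q.1 = q.2.1 then α * β * eval (fun i => v i) (p q.2.2) else 0)
      - 4 * β * (v q.1 * eval (fun i => v i) (pderiv q.2.1 (p q.2.2)))
      + 4 * (‖v‖ ^ 2 * eval (fun i => v i) (pderiv q.1 (pderiv q.2.1 (p q.2.2))))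
  have hW : ∀ B : Fin m → Fin m → ι → ℝ, ∑ q : Fin m × Fin m × ι, W q * B q.1 q.2.1 q.2.2 =
      α * β * (∑ i, ∑ s, B i i s * eval (fun i => v i) (p s))
        - 4 * β * (∑ i, ∑ j, v i * ∑ s, B i j s * eval (fun i => v i) (pderiv j (p s)))
        + 4 * (‖v‖ ^ 2 * ∑ i, ∑ j, ∑ s, B i j s *
          eval (fun i => v i) (pderiv i (pderiv j (p s)))) := by
    intro B
    have h1 : ∑ i, ∑ s, B i i s * eval (fun i => v i) (p s) = ∑ i, ∑ j, ∑ s,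
        if i = j then B i j s * eval (fun i => v i) (p s) else 0 := by
      refine Finset.sum_congr rfl fun i _ => ?_
      rw [Finset.sum_comm]
      refine Finset.sum_congr rfl fun s _ => ?_
      simp
    rw [h1]
    simp only [Fintype.sum_prod_type, Finset.mul_sum, ← Finset.sum_sub_distrib,
      ← Finset.sum_add_distrib, W]
    refine Finset.sum_congr rfl fun i _ => Finset.sum_congr rfl fun j _ =>
      Finset.sum_congr rfl fun s _ => ?_
    split_ifs <;> ring
  have hpt : ∀ x, ∑ q : Fin m × Fin m × ι, W q * pdv q.1 (pdv q.2.1 (a q.2.2)) x = 0 := by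
    intro x
    rw [hW fun i j s => pdv i (pdv j (a s)) x]
    have h := hD x v hv
    rw [Dk] at h
    have e1 : ∀ i, pd1 i (pd1 i f) x v = ∑ s, pdv i (pdv i (a s)) x * eval (fun i => v i) (p s) :=
      fun i => ((hf.pd1 hd i).pd1 (hd1 i) i) x v hv
    have e2 : ∀ i j, pd1 i (pd2 j (pd1 j f)) x v =
        ∑ s, pdv i (pdv j (a s)) x * eval (fun i => v i) (pderiv j (p s)) :=
      fun i j => (((hf.pd1 hd j).pd2 j).pd1 (hd1 j) i) x v hv
    have e3 : ∀ i j, pd2 i (pd1 i (pd2 j (pd1 j f))) x v =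
        ∑ s, pdv i (pdv j (a s)) x * eval (fun i => v i) (pderiv i (pderiv j (p s))) :=
      fun i j => ((((hf.pd1 hd j).pd2 j).pd1 (hd1 j) i).pd2 i) x v hv
    simp only [e1, e2, e3] at h
    rw [← hα, ← hβ] at h
    have h' := congrArg (fun t => α * β * t) h
    simp only [mul_zero] at h'
    rw [← h']
    field_simp
  have hfi := sum_mul_integral_eq_zero (fun q : Fin m × Fin m × ι => ha2 q.2.2 q.1 q.2.1) hpt φ
  rw [hW fun i j s => ∫ x, pdv i (pdv j (a s)) x * φ.1 x] at hfi
  have hv2 : ∑ i, v i ^ 2 = ‖v‖ ^ 2 := by simp [EuclideanSpace.real_norm_sq_eq]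
  simp only [pderiv_polyDistrib, map_add, map_sub, smul_eval, map_sum, map_mul, eval_X,
    eval_polyDistrib, map_pow, hv2, integral_mul_pdv_pdv (ha _) φ.2.1 φ.2.2]
  exact hfi

theorem weakPolyharmonic_of_bosonic {k : ℕ} (hm : 4 < m) {a : ι → Evec m → ℝ}
    (ha : ∀ s, ContDiff ℝ 2 (a s)) {p : ι → MvPolynomial (Fin m) ℝ}
    (hp : ∀ s, (p s).totalDegree ≤ k) {f : Evec m → Evec m → ℝ}
    (hf : IsPolyExpansion a p f)
    (hD : ∀ x : Evec m, ∀ ν ∈ ball (0 : Evec m) 1, Dk m k f x ν = 0) {ν : Evec m}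
    (hν : ν ∈ ball (0 : Evec m) 1) : WeakPolyharmonic (k + 1) fun x => f x ν := by
  intro φ hφ hφ'
  have h := opL_iterate_eq_zero_of_bosonic (d := TestFn.pdv (m := m))
    (fun i j φ => Subtype.ext (pdv_comm φ.2.1 i j)) k hm (fun φ => polyDistrib a p φ.1)
    (fun φ => totalDegree_polyDistrib_le a hp φ.1) (polyDistrib_bosonic hm ha hf hD)
  have hac : ∀ s, Continuous (a s) := fun s => (ha s).continuous
  have h1 : polyDistrib a p (lapl^[k + 1] φ) = 0 :=
    (opL_iterate_polyDistrib hac p (k + 1) ⟨φ, hφ, hφ'⟩).symm.trans (congrFun h _)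
  have h2 := congrArg (eval fun i => ν i) h1
  rw [eval_polyDistrib] at h2
  rw [map_zero] at h2
  rw [← h2]
  simp only [← integral_mul_const]
  rw [← integral_finsetSum _ fun s _ => (integrable_mul_test (hac s)
    (contDiff_lapl_iterate hφ _).continuous (hasCompactSupport_lapl_iterate hφ' _)).mul_const _]
  congr 1
  ext x
  rw [hf x ν hν, Finset.sum_mul]
  exact Finset.sum_congr rfl fun s _ => by ring

theorem C2Hk.exists_polyExpansion {k : ℕ} {f : Evec m → Evec m → ℝ}
    (hreg : C2Hk m k Set.univ f) : ∃ (ι : Type) (_ : Fintype ι) (a : ι → Evec m → ℝ)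
    (p : ι → MvPolynomial (Fin m) ℝ), (∀ s, ContDiff ℝ 2 (a s)) ∧
    (∀ s, (p s).totalDegree ≤ k) ∧ IsPolyExpansion a p f := by
  obtain ⟨ι, hι, u, p, hu, hp, hP⟩ := exists_interpolation m k
  refine ⟨ι, hι, fun s x => f x (u s), p, fun s => ?_, hp, fun x v hv => ?_⟩
  · rw [← contDiffOn_univ]
    exact hreg.1.comp (contDiff_id.prodMk contDiff_const).contDiffOn
      fun x _ => ⟨Set.mem_univ _, hu s⟩
  · obtain ⟨q, hq, hfq⟩ := hreg.2 x (Set.mem_univ x)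
    obtain ⟨P, hPd, hqP⟩ := hq.exists_totalDegree_le
    have h := congrArg (eval fun i => v i) (hP P hPd)
    rw [hfq v (ball_subset_closedBall hv), hqP, h]
    simp only [map_sum, map_mul, eval_C]
    refine Finset.sum_congr rfl fun s _ => ?_
    rw [hfq (u s) (ball_subset_closedBall (hu s)), hqP]

theorem growth_of_fibre_growth {k l : ℕ} {a : ι → Evec m → ℝ} (ha : ∀ s, Continuous (a s))
    {p : ι → MvPolynomial (Fin m) ℝ} (hp : ∀ s, (p s).totalDegree ≤ k)
    {f : Evec m → Evec m → ℝ} (hf : IsPolyExpansion a p f)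
    (hgrow :
      (fun R : ℝ => ∫ x in ball (0 : Evec m) R, ∫ ν in ball (0 : Evec m) 1, |f x ν|)
        =o[atTop] fun R : ℝ => R ^ (l + m)) {ν : Evec m} (hν : ν ∈ ball (0 : Evec m) 1) :
    (fun R : ℝ => ∫ x in ball (0 : Evec m) R, |f x ν|) =o[atTop] fun R : ℝ => R ^ (l + m) := by
  obtain ⟨c, hc0, hc⟩ := abs_eval_le_integral m k ν
  let P : Evec m → MvPolynomial (Fin m) ℝ := fun x => ∑ s, a s x • p s
  have hfP : ∀ x, ∀ v ∈ ball (0 : Evec m) 1, f x v = eval (fun i => v i) (P x) := by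
    intro x v hv
    rw [hf x v hv]
    simp [P, smul_eval]
  have hPd : ∀ x, (P x).totalDegree ≤ k := fun x =>
    totalDegree_finsetSum_le fun s _ => (totalDegree_smul_le _ _).trans (hp s)
  have hI : ∀ x, ∫ v in ball (0 : Evec m) 1, |f x v| = ‖∑ s, a s x • polyL1 m (p s)‖ := by
    intro x
    rw [setIntegral_congr_fun measurableSet_ball fun v hv => by rw [hfP x v hv], ← norm_polyL1]
    simp [P]
  have hIc : Continuous fun x => ∫ v in ball (0 : Evec m) 1, |f x v| := by
    simp only [hI]
    fun_prop
  have hfc : Continuous fun x => |f x ν| := by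
    simp only [hf _ ν hν]
    fun_prop
  have hfi : ∀ {g : Evec m → ℝ}, Continuous g → ∀ R, IntegrableOn g (ball (0 : Evec m) R) :=
    fun hg R => (hg.continuousOn.integrableOn_compact
      (isCompact_closedBall (0 : Evec m) R)).mono_set ball_subset_closedBall
  refine Asymptotics.IsBigO.trans_isLittleO (Asymptotics.IsBigO.of_bound c ?_) hgrow
  refine Eventually.of_forall fun R => ?_
  rw [Real.norm_of_nonneg (integral_nonneg fun x => abs_nonneg _),
    Real.norm_of_nonneg (integral_nonneg fun x => integral_nonneg fun v => abs_nonneg _),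
    ← integral_const_mul]
  refine integral_mono (hfi hfc R) ((hfi hIc R).const_mul c) fun x => ?_
  have h := hc (P x) (hPd x)
  rw [← hfP x ν hν, setIntegral_congr_fun measurableSet_ball fun v hv =>
    show |eval (fun i => v i) (P x)| = |f x v| by rw [hfP x v hv]] at h
  exact h

theorem iterate_pd1_apply (i : Fin m) (n : ℕ) (g : Evec m → Evec m → ℝ) (ν : Evec m) :
    (fun x => (pd1 i)^[n] g x ν) = pdvs (List.replicate n i) fun x => g x ν := by
  induction n with
  | zero => rfl
  | succ n ih =>
    rw [List.replicate_succ, pdvs_cons, ← ih, Function.iterate_succ_apply']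
    rfl

theorem foldr_pd1_apply (α : Fin m → ℕ) (f : Evec m → Evec m → ℝ) (ν : Evec m)
    (L : List (Fin m)) :
    (fun x => L.foldr (fun i g => (pd1 i)^[α i] g) f x ν) =
      pdvs (L.flatMap fun i => List.replicate (α i) i) fun x => f x ν := by
  induction L with
  | nil => rfl
  | cons i L ih =>
    rw [List.flatMap_cons, pdvs, List.foldr_append, List.foldr_cons, iterate_pd1_apply, ih]
    rfl

end Bosonic

end Helpers

/-- polynomial growth implies polynomial, `m > 4`. -/
theorem stmt_18 (m k : ℕ) (hm : 4 < m) (hk : 1 ≤ k) (l : ℕ) (hl : 1 ≤ l)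
    (f : Evec m → Evec m → ℝ)
    (hreg : C2Hk m k Set.univ f)
    (hD : ∀ x : Evec m, ∀ ν ∈ ball (0 : Evec m) 1, Dk m k f x ν = 0)
    (hgrow :
      (fun R : ℝ => ∫ x in ball (0 : Evec m) R, ∫ ν in ball (0 : Evec m) 1, |f x ν|)
        =o[atTop] fun R : ℝ => R ^ (l + m)) :
    ∀ α : Fin m → ℕ, (∑ i, α i) = l →
      ∀ x ν : Evec m, ‖ν‖ < 1 → Dx α f x ν = 0 := by
  intro α hα x ν hν
  rw [← mem_ball_zero_iff] at hν
  obtain ⟨ι, _, a, p, ha, hp, hf⟩ := hreg.exists_polyExpansion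
  have hac : ∀ s, Continuous (a s) := fun s => (ha s).continuous
  have hc : Continuous fun x => f x ν := by
    simp only [hf _ ν hν]
    fun_prop
  refine (congrFun (foldr_pd1_apply α f ν (List.finRange m)) x).trans ?_
  refine pdvs_eq_zero_of_growth hc (weakPolyharmonic_of_bosonic hm ha hp hf hD hν)
    (growth_of_fibre_growth hac hp hf hgrow hν) _ ?_ x
  simp [List.length_flatMap, ← hα, ← List.sum_ofFn, List.ofFn_eq_map]
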